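/- arXiv:1812.01934 — 13 statements merged into one kernel-verified Lean document; each statement's English description precedes it below -/
import Mathlib

section
/- Let σ be a relational first-order language and let M be a countable σ-structure. Then M is HH-homogeneous if and only if M has the HH-extension property (HHEP). -/
open FirstOrder Language Structure

universe u v w

/-- `M` is HH-homogeneous: every homomorphism between finite substructures of `M`
extends to an endomorphism of `M`. -/
def IsHHHomogeneous (L : FirstOrder.Language.{u, v}) (M : Type w) [L.Structure M] : Prop :=
  ∀ (A B : L.Substructure M), (A : Set M).Finite → (B : Set M).Finite →
    ∀ f : A →[L] B, ∃ g : M →[L] M, ∀ a : A, g (a : M) = (f a : M)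

/-- `M` has the HH-extension property: for every finite structure `B` in the age of `M`,
every substructure `A` of `B`, and every homomorphism `f : A → M`, there is a
homomorphism `g : B → M` restricting to `f` on `A`. -/
def HasHHEP (L : FirstOrder.Language.{u, v}) (M : Type w) [L.Structure M] : Prop :=
  ∀ (B : Type w) [L.Structure B], Finite B → Nonempty (B ↪[L] M) →
    ∀ (A : L.Substructure B) (f : A →[L] M), ∃ g : B →[L] M, ∀ a : A, g (a : B) = f a

/-- `h` preserves all relations on tuples from `S`. -/
def PresOn (L : FirstOrder.Language.{u, v}) {M : Type w} [L.Structure M]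
    (S : Set M) (h : M → M) : Prop :=
  ∀ (n : ℕ) (R : L.Relations n) (x : Fin n → M), (∀ i, x i ∈ S) → RelMap R x → RelMap R (h ∘ x)

/-- The substructure on a set in a relational language. -/
def setSub (L : FirstOrder.Language.{u, v}) [L.IsRelational] {M : Type w} [L.Structure M]
    (S : Set M) : L.Substructure M :=
  ⟨S, fun f => isEmptyElim f⟩

theorem mem_setSub (L : FirstOrder.Language.{u, v}) [L.IsRelational] {M : Type w} [L.Structure M]
    (S : Set M) (x : M) : x ∈ setSub L S ↔ x ∈ S := Iff.rfl

theorem presOn_extend (L : FirstOrder.Language.{u, v}) [L.IsRelational] {M : Type w}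
    [L.Structure M] (H : HasHHEP L M) {S T : Set M} (hST : S ⊆ T) (hT : T.Finite)
    (h : M → M) (hh : PresOn L S h) : ∃ h' : M → M, PresOn L T h' ∧ ∀ x ∈ S, h' x = h x := by
  classical
  obtain ⟨g, hg⟩ := H (setSub L T) (hT : Finite T) ⟨(setSub L T).subtype⟩
    ((setSub L S).comap (setSub L T).subtype.toHom)
    { toFun := fun a => h a.1.1
      map_fun' := fun f => isEmptyElim f
      map_rel' := fun R x hx => hh _ R (fun i => (x i).1.1) (fun i => (x i).2) hx }
  refine ⟨fun x => if hx : x ∈ T then g ⟨x, hx⟩ else h x, ?_, ?_⟩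
  · intro n R x hx hR
    have := g.map_rel R (fun i => (⟨x i, hx i⟩ : setSub L T)) hR
    convert this using 1
    funext i
    simp [hx i]
  · intro x hx
    simp only [hST hx, dif_pos]
    exact hg ⟨⟨x, hST hx⟩, hx⟩

theorem presOn_total (L : FirstOrder.Language.{u, v}) [L.IsRelational] {M : Type w}
    [L.Structure M] [Countable M] (H : HasHHEP L M) {S : Set M} (hS : S.Finite)
    (h : M → M) (hh : PresOn L S h) : ∃ g : M →[L] M, ∀ x ∈ S, g x = h x := by
  obtain ⟨e, he⟩ := exists_injective_nat M
  let T : ℕ → Set M := fun n => S ∪ {x | e x < n}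
  have hTf : ∀ n, (T n).Finite := fun n =>
    hS.union ((Set.finite_lt_nat n).preimage he.injOn)
  have hTm : ∀ n, T n ⊆ T (n + 1) := fun n =>
    Set.union_subset_union_right _ fun x (hx : e x < n) => Nat.lt_succ_of_lt hx
  have hTmono : Monotone T := monotone_nat_of_le_succ hTm
  have step : ∀ (n : ℕ) (k : {k : M → M // PresOn L (T n) k}),
      ∃ k' : {k : M → M // PresOn L (T (n + 1)) k}, ∀ x ∈ T n, k'.1 x = k.1 x := fun n k => by
    obtain ⟨k', h1, h2⟩ := presOn_extend L H (hTm n) (hTf _) k.1 k.2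
    exact ⟨⟨k', h1⟩, h2⟩
  choose F hF using step
  obtain ⟨k0, hk0, hk0'⟩ := presOn_extend L H (Set.subset_union_left : S ⊆ T 0) (hTf 0) h hh
  let q : ∀ n, {k : M → M // PresOn L (T n) k} := fun n => Nat.rec ⟨k0, hk0⟩ F n
  have hq : ∀ n, ∀ x ∈ T n, (q (n + 1)).1 x = (q n).1 x := fun n => hF n (q n)
  have hq' : ∀ n m, n ≤ m → ∀ x ∈ T n, (q m).1 x = (q n).1 x := by
    intro n m hnm x hx
    induction m, hnm using Nat.le_induction with
    | base => rfl
    | succ m hm ih => rw [hq m x (hTmono hm hx), ih]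
  have hmem : ∀ x, x ∈ T (e x + 1) := fun x => Or.inr (Nat.lt_succ_self _)
  refine ⟨⟨fun x => (q (e x + 1)).1 x, fun f => isEmptyElim f, ?_⟩, ?_⟩
  · intro n R x hR
    let N := Finset.univ.sup (fun i => e (x i) + 1)
    have hN : ∀ i, e (x i) + 1 ≤ N := fun i =>
      Finset.le_sup (f := fun i => e (x i) + 1) (Finset.mem_univ i)
    have := (q N).2 n R x (fun i => hTmono (hN i) (hmem _)) hR
    convert this using 1
    funext i
    exact (hq' _ _ (hN i) _ (hmem _)).symm
  · intro x hx
    exact (hq' 0 (e x + 1) (Nat.zero_le _) x (Or.inl hx)).trans (hk0' x hx)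

theorem hh_homogeneous_iff_hhep (L : FirstOrder.Language.{u, v}) [L.IsRelational]
    (M : Type w) [L.Structure M] [Countable M] :
    IsHHHomogeneous L M ↔ HasHHEP L M := by
  constructor
  · intro H B _ hB he A f
    obtain ⟨e⟩ := he
    let E := e.substructureEquivMap A
    have hA : Finite A := inferInstance
    obtain ⟨g, hg⟩ := H (A.map e.toHom) (setSub L (Set.range f))
      (Set.Finite.image e (Set.toFinite (A : Set B))) (Set.finite_range f)
      ((f.codRestrict (setSub L (Set.range f)) (fun a => ⟨a, rfl⟩)).comp E.symm.toHom)
    refine ⟨g.comp e.toHom, fun a => ?_⟩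
    have h1 := hg (E a)
    have h2 : E.symm (E a) = a := E.symm_apply_apply a
    refine h1.trans ?_
    change f (E.symm (E a)) = f a
    rw [h2]
  · intro H A B hA _ f
    classical
    obtain ⟨g, hg⟩ := presOn_total L H hA
      (fun x => if hx : x ∈ A then (f ⟨x, hx⟩ : M) else x) (by
        intro n R x hx hR
        have := f.map_rel R (fun i => (⟨x i, hx i⟩ : A)) hR
        have h3 : RelMap R (fun i => (f ⟨x i, hx i⟩ : M)) := this
        convert h3 using 1
        funext i
        exact dif_pos (hx i))
    refine ⟨g, fun a => (hg a a.2).trans ?_⟩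
    exact dif_pos a.2
end

section
/- Let σ be a relational first-order language and let M be a countable σ-structure. Then M is MM-homogeneous if and only if M has the MM-extension property (MMEP). -/
open FirstOrder Language Structure

universe u v w

/-- `M` is MM-homogeneous: every monomorphism (injective homomorphism) between finite
substructures of `M` extends to an injective endomorphism of `M`. -/
def IsMMHomogeneous (L : FirstOrder.Language.{u, v}) (M : Type w) [L.Structure M] : Prop :=
  ∀ (A B : L.Substructure M), (A : Set M).Finite → (B : Set M).Finite →
    ∀ f : A →[L] B, Function.Injective f →
      ∃ g : M →[L] M, Function.Injective g ∧ ∀ a : A, g (a : M) = (f a : M)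

/-- `M` has the MM-extension property: for every finite structure `B` in the age of `M`,
every substructure `A` of `B`, and every monomorphism `f : A → M`, there is a
monomorphism `g : B → M` restricting to `f` on `A`. -/
def HasMMEP (L : FirstOrder.Language.{u, v}) (M : Type w) [L.Structure M] : Prop :=
  ∀ (B : Type w) [L.Structure B], Finite B → Nonempty (B ↪[L] M) →
    ∀ (A : L.Substructure B) (f : A →[L] M), Function.Injective f →
      ∃ g : B →[L] M, Function.Injective g ∧ ∀ a : A, g (a : B) = f a

/-- `h` restricted to `S` is a monomorphism. -/
def MMPart (L : FirstOrder.Language.{u, v}) (M : Type w) [L.Structure M]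
    (S : Set M) (h : M → M) : Prop :=
  Set.InjOn h S ∧ ∀ (n : ℕ) (R : L.Relations n) (x : Fin n → M), (∀ i, x i ∈ S) →
    RelMap R x → RelMap R (h ∘ x)

/-- Any set is a substructure, in a relational language. -/
def mmSub (L : FirstOrder.Language.{u, v}) [L.IsRelational] {M : Type w} [L.Structure M]
    (S : Set M) : L.Substructure M :=
  ⟨S, fun f => isEmptyElim f⟩

theorem mm_step (L : FirstOrder.Language.{u, v}) [L.IsRelational]
    (M : Type w) [L.Structure M] (H : HasMMEP L M) (S : Set M) (h : M → M)
    (hS : S.Finite) (hP : MMPart L M S h) (m : M) :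
    ∃ h', MMPart L M (insert m S) h' ∧ Set.EqOn h' h S := by
  classical
  have hT : (insert m S).Finite := hS.insert m
  let T : L.Substructure M := mmSub L (insert m S)
  let A : L.Substructure T := mmSub L {x | (x : M) ∈ S}
  let f : A →[L] M :=
    { toFun := fun a => h ((a : T) : M)
      map_fun' := fun f => isEmptyElim f
      map_rel' := fun {n} R x hx => hP.2 n R (fun i => ((x i : T) : M)) (fun i => (x i).2) hx }
  have hf : Function.Injective f := fun a b hab =>
    Subtype.ext (Subtype.ext (hP.1 a.2 b.2 hab))
  obtain ⟨g, gi, hg⟩ := H T hT.to_subtype ⟨T.subtype⟩ A f hf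
  have key : ∀ x (hx : x ∈ insert m S),
      (fun x => if hx : x ∈ insert m S then g ⟨x, hx⟩ else h x) x = g ⟨x, hx⟩ :=
    fun x hx => dif_pos hx
  refine ⟨fun x => if hx : x ∈ insert m S then g ⟨x, hx⟩ else h x, ⟨?_, ?_⟩, ?_⟩
  · intro a ha b hb hab
    rw [key a ha, key b hb] at hab
    exact congrArg Subtype.val (gi hab)
  · intro n R x hx hR
    have h1 := g.map_rel R (fun i => (⟨x i, hx i⟩ : T)) hR
    convert h1 using 1
    funext i
    exact key _ (hx i)
  · intro x hx
    rw [key x (Set.mem_insert_of_mem m hx)]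
    exact hg ⟨⟨x, Set.mem_insert_of_mem m hx⟩, hx⟩

theorem mm_limit (L : FirstOrder.Language.{u, v}) [L.IsRelational]
    (M : Type w) [L.Structure M] [Countable M] (H : HasMMEP L M) (S : Set M) (h : M → M)
    (hS : S.Finite) (hP : MMPart L M S h) :
    ∃ g : M →[L] M, Function.Injective g ∧ ∀ a ∈ S, g a = h a := by
  classical
  rcases isEmpty_or_nonempty M with hM | hM
  · exact ⟨Hom.id L M, fun a => isEmptyElim a, fun a => isEmptyElim a⟩
  obtain ⟨e, he⟩ := exists_surjective_nat M
  choose! st hst1 hst2 using mm_step L M H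
  let q : ℕ → Set M × (M → M) := fun n => Nat.rec (S, h)
    (fun k p => (insert (e k) p.1, st p.1 p.2 (e k))) n
  have q1 : ∀ k, (q (k+1)).1 = insert (e k) (q k).1 := fun k => rfl
  have q2 : ∀ k, (q (k+1)).2 = st (q k).1 (q k).2 (e k) := fun k => rfl
  have hq : ∀ k, (q k).1.Finite ∧ MMPart L M (q k).1 (q k).2 := by
    intro k
    induction k with
    | zero => exact ⟨hS, hP⟩
    | succ k ih =>
      rw [q2, q1]
      exact ⟨ih.1.insert _, hst1 _ _ ih.1 ih.2 _⟩
  have mono : Monotone (fun k => (q k).1) := monotone_nat_of_le_succ fun k => by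
    rw [q1]; exact Set.subset_insert _ _
  have eqs : ∀ j k, j ≤ k → Set.EqOn (q k).2 (q j).2 (q j).1 := by
    intro j k hjk
    induction k, hjk using Nat.le_induction with
    | base => exact fun _ _ => rfl
    | succ k hk ih =>
      intro x hx
      rw [q2, hst2 _ _ (hq k).1 (hq k).2 _ (mono hk hx)]
      exact ih hx
  have cov : ∀ x, ∃ k, x ∈ (q k).1 := by
    intro x
    obtain ⟨k, rfl⟩ := he x
    exact ⟨k+1, by rw [q1]; exact Set.mem_insert _ _⟩
  choose N hN using cov
  have geq : ∀ x k, N x ≤ k → (q (N x)).2 x = (q k).2 x :=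
    fun x k hk => (eqs _ _ hk (hN x)).symm
  refine ⟨{ toFun := fun x => (q (N x)).2 x
            map_fun' := fun f => isEmptyElim f
            map_rel' := ?_ }, ?_, ?_⟩
  · intro n R x hx
    let K := Finset.univ.sup (fun i => N (x i))
    have hK : ∀ i, N (x i) ≤ K := fun i =>
      Finset.le_sup (f := fun i => N (x i)) (Finset.mem_univ i)
    have h1 := (hq K).2.2 n R x (fun i => mono (hK i) (hN _)) hx
    convert h1 using 1
    funext i
    exact geq _ _ (hK i)
  · intro a b hab
    change (q (N a)).2 a = (q (N b)).2 b at hab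
    have ha := le_max_left (N a) (N b)
    have hb := le_max_right (N a) (N b)
    rw [geq a _ ha, geq b _ hb] at hab
    exact (hq _).2.1 (mono ha (hN a)) (mono hb (hN b)) hab
  · intro a ha
    exact eqs 0 (N a) (Nat.zero_le _) ha

theorem mm_homogeneous_iff_mmep (L : FirstOrder.Language.{u, v}) [L.IsRelational]
    (M : Type w) [L.Structure M] [Countable M] :
    IsMMHomogeneous L M ↔ HasMMEP L M := by
  classical
  constructor
  · rintro H B _ hB ⟨e⟩ A f hf
    let A' : L.Substructure M := mmSub L (Set.range fun a : A => e (a : B))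
    let C : L.Substructure M := mmSub L (Set.range f)
    have hA' : ∀ a : A', ∃ b : A, e (b : B) = (a : M) := fun a => a.2
    choose p hp using hA'
    let f' : A' →[L] C :=
      { toFun := fun a => ⟨f (p a), p a, rfl⟩
        map_fun' := fun f => isEmptyElim f
        map_rel' := by
          intro n R x hx
          apply f.map_rel R (fun i => p (x i))
          change RelMap R (fun i => ((p (x i) : A) : B))
          rw [← e.map_rel]
          have : (e ∘ fun i => ((p (x i) : A) : B)) = fun i => (x i : M) :=
            funext fun i => hp (x i)
          rw [this]
          exact hx }
    have hf' : Function.Injective f' := by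
      intro a b hab
      have h1 : p a = p b := hf (congrArg Subtype.val hab)
      apply Subtype.ext
      rw [← hp a, ← hp b, h1]
    obtain ⟨g, gi, hg⟩ := H A' C (Set.finite_range _) (Set.finite_range _) f' hf'
    refine ⟨g.comp e.toHom, gi.comp e.injective, fun a => ?_⟩
    have h1 := hg ⟨e (a : B), a, rfl⟩
    have h2 : p ⟨e (a : B), a, rfl⟩ = a := Subtype.ext (e.injective (hp _))
    refine h1.trans ?_
    change f (p ⟨e (a : B), a, rfl⟩) = f a
    rw [h2]
  · intro H A B hA _ f hf
    let h : M → M := fun x => if hx : x ∈ A then (f ⟨x, hx⟩ : M) else x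
    have key : ∀ x (hx : x ∈ A), h x = f ⟨x, hx⟩ := fun x hx => dif_pos hx
    suffices hP : MMPart L M (A : Set M) h by
      obtain ⟨g, gi, hg⟩ := mm_limit L M H (A : Set M) h hA hP
      exact ⟨g, gi, fun a => (hg a a.2).trans (key a a.2)⟩
    constructor
    · intro a ha b hb hab
      rw [key a ha, key b hb] at hab
      exact congrArg Subtype.val (hf (Subtype.ext hab))
    · intro n R x hx hR
      have h1 := f.map_rel R (fun i => (⟨x i, hx i⟩ : A)) hR
      have h2 : h ∘ x = fun i => ((f ⟨x i, hx i⟩ : B) : M) := funext fun i => key _ (hx i)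
      rw [h2]
      exact h1
end

section
/- Let σ be a relational first-order language. If a countable σ-structure M is HH-homogeneous, then Age(M) has the homo-amalgamation property (HAP): for all A, B1, B2 in Age(M), every homomorphism f1 : A → B1 and every embedding f2 : A → B2, there exist D in Age(M), an embedding g1 : B1 → D, and a homomorphism g2 : B2 → D such that g1 ∘ f1 = g2 ∘ f2. -/
open FirstOrder Language Structure CategoryTheory

universe u v w

variable {L : FirstOrder.Language.{u, v}}

/-- The age of `M`: the class of finite structures which embed into `M`. -/
def finAge (L : FirstOrder.Language.{u, v}) (M : Type w) [L.Structure M] :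
    Set (Bundled.{w} L.Structure) :=
  {B | Finite B ∧ Nonempty (B ↪[L] M)}

/-- A class of structures has the homo-amalgamation property (HAP). -/
def HasHAP (C : Set (Bundled.{w} L.Structure)) : Prop :=
  ∀ A B₁ B₂ : Bundled.{w} L.Structure, A ∈ C → B₁ ∈ C → B₂ ∈ C →
    ∀ (f₁ : A →[L] B₁) (f₂ : A ↪[L] B₂),
      ∃ D ∈ C, ∃ (g₁ : B₁ ↪[L] D) (g₂ : B₂ →[L] D), ∀ a : A, g₁ (f₁ a) = g₂ (f₂ a)

theorem age_hasHAP_of_hh_homogeneous (L : FirstOrder.Language.{u, v}) [L.IsRelational]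
    (M : Type w) [L.Structure M] [Countable M] (h : IsHHHomogeneous L M) :
    HasHAP (finAge L M) := by
  rintro A B₁ B₂ - ⟨hB₁, ⟨e₁⟩⟩ ⟨hB₂, ⟨e₂⟩⟩ f₁ f₂
  have hA : Finite A := Finite.of_injective f₂ f₂.injective
  let e : A ↪[L] M := e₂.comp f₂
  have hS : ((e.toHom.range : L.Substructure M) : Set M).Finite := by
    rw [Hom.range_coe]; exact Set.finite_range _
  have hT : ((e₁.toHom.range : L.Substructure M) : Set M).Finite := by
    rw [Hom.range_coe]; exact Set.finite_range _
  obtain ⟨g, hg⟩ := h _ _ hS hT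
    ((e₁.equivRange.toHom.comp f₁).comp e.equivRange.symm.toHom)
  have hg' : ∀ a : A, g (e₂ (f₂ a)) = e₁ (f₁ a) := by
    intro a
    have := hg (e.equivRange a)
    have h2 : e.equivRange.symm (e.equivRange a) = a := e.equivRange.symm_apply_apply a
    have h3 : g (e₂ (f₂ a)) = e₁ (f₁ (e.equivRange.symm (e.equivRange a))) := this
    rw [h3, h2]
  let D : L.Substructure M :=
    Substructure.closure L (Set.range e₁ ∪ Set.range (g.comp e₂.toHom))
  have hD : (D : Set M) = Set.range e₁ ∪ Set.range (g.comp e₂.toHom) :=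
    Substructure.closure_eq_of_isRelational L _
  have hD' : ∀ x, x ∈ Set.range e₁ ∪ Set.range (g.comp e₂.toHom) → x ∈ D := fun x hx =>
    Substructure.subset_closure hx
  have hfin : Finite D := by
    have : (D : Set M).Finite := by
      rw [hD]; exact (Set.finite_range _).union (Set.finite_range _)
    exact this.to_subtype
  refine ⟨⟨D, inferInstance⟩, ⟨hfin, ⟨D.subtype⟩⟩,
    Embedding.codRestrict D e₁ (fun b => hD' _ (Or.inl ⟨b, rfl⟩)),
    Hom.codRestrict D (g.comp e₂.toHom) (fun b => hD' _ (Or.inr ⟨b, rfl⟩)), ?_⟩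
  intro a
  apply Subtype.ext
  exact (hg' a).symm
end

section
/- Let σ be a relational first-order language. If a countable σ-structure M is MM-homogeneous, then Age(M) has the mono-amalgamation property (MAP): for all A, B1, B2 in Age(M), every monomorphism f1 : A → B1 and every embedding f2 : A → B2, there exist D in Age(M), an embedding g1 : B1 → D, and a monomorphism g2 : B2 → D such that g1 ∘ f1 = g2 ∘ f2. -/
open FirstOrder Language Structure CategoryTheory

universe u v w

variable {L : FirstOrder.Language.{u, v}}

/-- A class of structures has the mono-amalgamation property (MAP). -/
def HasMAP (C : Set (Bundled.{w} L.Structure)) : Prop :=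
  ∀ A B₁ B₂ : Bundled.{w} L.Structure, A ∈ C → B₁ ∈ C → B₂ ∈ C →
    ∀ (f₁ : A →[L] B₁), Function.Injective f₁ → ∀ (f₂ : A ↪[L] B₂),
      ∃ D ∈ C, ∃ (g₁ : B₁ ↪[L] D) (g₂ : B₂ →[L] D),
        Function.Injective g₂ ∧ ∀ a : A, g₁ (f₁ a) = g₂ (f₂ a)

theorem age_hasMAP_of_mm_homogeneous (L : FirstOrder.Language.{u, v}) [L.IsRelational]
    (M : Type w) [L.Structure M] [Countable M] (h : IsMMHomogeneous L M) :
    HasMAP (finAge L M) := by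
  rintro A B₁ B₂ ⟨hA, -⟩ ⟨hB₁, ⟨e₁⟩⟩ ⟨hB₂, ⟨e₂⟩⟩ f₁ hf₁ f₂
  have hA' : Finite A := hA
  have hB₁' : Finite B₁ := hB₁
  have hB₂' : Finite B₂ := hB₂
  let e : A ↪[L] M := e₂.comp f₂
  let φ : e.toHom.range →[L] e₁.toHom.range :=
    (e₁.equivRange.toHom.comp f₁).comp e.equivRange.symm.toHom
  have hφ : Function.Injective φ := fun x y hxy =>
    e.equivRange.symm.injective (hf₁ (e₁.equivRange.injective hxy))
  have fin1 : (e.toHom.range : Set M).Finite := by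
    rw [Hom.range_coe]; exact Set.finite_range _
  have fin2 : (e₁.toHom.range : Set M).Finite := by
    rw [Hom.range_coe]; exact Set.finite_range _
  obtain ⟨g, hg, hgφ⟩ := h _ _ fin1 fin2 φ hφ
  let S : Set M := Set.range e₁ ∪ Set.range (fun b => g (e₂ b))
  let D : L.Substructure M := Substructure.closure L S
  have hD : (D : Set M) = S := Substructure.closure_eq_of_isRelational L S
  have hDfin : Finite D := by
    have : (D : Set M).Finite := by
      rw [hD]; exact (Set.finite_range _).union (Set.finite_range _)
    exact this.to_subtype
  have m₁ : ∀ b, e₁ b ∈ D := fun b => Substructure.subset_closure (Or.inl ⟨b, rfl⟩)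
  have m₂ : ∀ b, (g.comp e₂.toHom) b ∈ D := fun b =>
    Substructure.subset_closure (Or.inr ⟨b, rfl⟩)
  refine ⟨⟨D, inferInstance⟩, ⟨hDfin, ⟨D.subtype⟩⟩, e₁.codRestrict D m₁,
    (g.comp e₂.toHom).codRestrict D m₂, ?_, ?_⟩
  · intro x y hxy
    exact e₂.injective (hg (congrArg Subtype.val hxy))
  · intro a
    apply Subtype.ext
    have := hgφ (e.equivRange a)
    have h2 : φ (e.equivRange a) = e₁.equivRange (f₁ a) := by
      change e₁.equivRange (f₁ (e.equivRange.symm (e.equivRange a))) = _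
      rw [FirstOrder.Language.Equiv.symm_apply_apply]
    rw [h2] at this
    exact this.symm
end

section
/- Let σ be a relational first-order language and let M and N be countable HH-homogeneous σ-structures with Age(M) = Age(N). Then M and N are H-equivalent: every embedding from a finite substructure of M into N extends to a homomorphism M → N, and every embedding from a finite substructure of N into M extends to a homomorphism N → M. -/
open FirstOrder Language Structure

universe u v w

variable {L : FirstOrder.Language.{u, v}}

/-- Every embedding from a finite substructure of `M` into `N` extends to a
homomorphism `M → N`. -/
def HomExtendable (L : FirstOrder.Language.{u, v}) (M N : Type w)
    [L.Structure M] [L.Structure N] : Prop :=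
  ∀ A : L.Substructure M, (A : Set M).Finite →
    ∀ f : A ↪[L] N, ∃ g : M →[L] N, ∀ a : A, g (a : M) = f a

/-- `p` preserves relations on tuples from `S`. -/
def PartHom (L : FirstOrder.Language.{u, v}) {M N : Type w} [L.Structure M] [L.Structure N]
    (S : Set M) (p : M → N) : Prop :=
  ∀ (n : ℕ) (r : L.Relations n) (x : Fin n → M), (∀ i, x i ∈ S) →
    RelMap r x → RelMap r (p ∘ x)

theorem HH_ext (L : FirstOrder.Language.{u, v}) [L.IsRelational] {N : Type w} [L.Structure N]
    (hN : IsHHHomogeneous L N) (U : Set N) (hU : U.Finite) (h : N → N) (hh : PartHom L U h) :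
    ∃ g : N →[L] N, ∀ u ∈ U, g u = h u := by
  have c1 : ((Substructure.closure L U : L.Substructure N) : Set N) = U :=
    Substructure.closure_eq_of_isRelational L U
  have c2 : ((Substructure.closure L (h '' U) : L.Substructure N) : Set N) = h '' U :=
    Substructure.closure_eq_of_isRelational L _
  have m1 : ∀ x, x ∈ Substructure.closure L U ↔ x ∈ U := fun x => by
    rw [← SetLike.mem_coe, c1]
  have m2 : ∀ x, x ∈ Substructure.closure L (h '' U) ↔ x ∈ h '' U := fun x => by
    rw [← SetLike.mem_coe, c2]
  let F : Substructure.closure L U →[L] Substructure.closure L (h '' U) :=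
    { toFun := fun x => ⟨h x, (m2 _).2 ⟨x, (m1 _).1 x.2, rfl⟩⟩
      map_fun' := fun f => isEmptyElim f
      map_rel' := fun {n} r x hx => hh n r (fun i => (x i : N)) (fun i => (m1 _).1 (x i).2) hx }
  obtain ⟨g, hg⟩ := hN _ _ (by rw [c1]; exact hU) (by rw [c2]; exact hU.image _) F
  exact ⟨g, fun u hu => hg ⟨u, (m1 u).2 hu⟩⟩

theorem PartHom_step (L : FirstOrder.Language.{u, v}) [L.IsRelational] {M N : Type w}
    [L.Structure M] [L.Structure N] (hN : IsHHHomogeneous L N)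
    (hage : ∀ (B : Type w) [L.Structure B], Finite B →
      (Nonempty (B ↪[L] M) → Nonempty (B ↪[L] N)))
    (S T : Set M) (hT : T.Finite) (hST : S ⊆ T) (p : M → N) (hp : PartHom L S p) :
    ∃ q : M → N, PartHom L T q ∧ ∀ s ∈ S, q s = p s := by
  classical
  have c1 : ((Substructure.closure L T : L.Substructure M) : Set M) = T :=
    Substructure.closure_eq_of_isRelational L T
  have m1 : ∀ x, x ∈ Substructure.closure L T ↔ x ∈ T := fun x => by
    rw [← SetLike.mem_coe, c1]
  have hfin : Finite (Substructure.closure L T) := by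
    have : Set.Finite ((Substructure.closure L T : L.Substructure M) : Set M) := by
      rw [c1]; exact hT
    exact this.to_subtype
  obtain ⟨e⟩ := hage (Substructure.closure L T) hfin ⟨Substructure.subtype _⟩
  let h : N → N := Function.extend e (fun t => p t) id
  have he : ∀ t, h (e t) = p t := fun t => e.injective.extend_apply _ _ _
  obtain ⟨g, hg⟩ := HH_ext L hN (e '' {t | (t : M) ∈ S}) ((Set.toFinite _).image _) h (by
    intro n r y hy hr
    choose x hx hxy using hy
    obtain rfl : e ∘ x = y := funext hxy
    rw [e.map_rel] at hr
    have := hp n r (fun i => (x i : M)) hx hr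
    convert this using 1
    funext i
    exact he _)
  refine ⟨fun m => if hm : m ∈ T then g (e ⟨m, (m1 m).2 hm⟩) else p m, ?_, ?_⟩
  · intro n r x hx hr
    have h1 : RelMap r (fun i => (⟨x i, (m1 _).2 (hx i)⟩ : Substructure.closure L T)) := hr
    have h2 := g.map_rel r _ ((e.map_rel r _).2 h1)
    convert h2 using 1
    funext i
    simp [hx i]
  · intro s hs
    simp only [hST hs, dif_pos]
    rw [hg _ ⟨_, hs, rfl⟩, he]

theorem HomExt_of (L : FirstOrder.Language.{u, v}) [L.IsRelational] {M N : Type w}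
    [L.Structure M] [L.Structure N] [Countable M] (hN : IsHHHomogeneous L N)
    (hage : ∀ (B : Type w) [L.Structure B], Finite B →
      (Nonempty (B ↪[L] M) → Nonempty (B ↪[L] N))) : HomExtendable L M N := by
  classical
  intro A hA f
  rcases isEmpty_or_nonempty M with hM | ⟨⟨m0⟩⟩
  · exact ⟨{ toFun := fun m => isEmptyElim m
             map_fun' := fun f => isEmptyElim f
             map_rel' := fun {n} r x hx => by
              have h1 : ∀ m : M, m ∈ A := fun m => isEmptyElim m
              have := (f.map_rel r (fun i => (⟨x i, h1 _⟩ : A))).2 hx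
              convert this using 1
              funext i
              exact isEmptyElim (x i) }, fun a => isEmptyElim (a : M)⟩
  obtain ⟨n0⟩ : Nonempty N := by
    have c1 : ((Substructure.closure L {m0} : L.Substructure M) : Set M) = {m0} :=
      Substructure.closure_eq_of_isRelational L _
    have hfin : Set.Finite ((Substructure.closure L {m0} : L.Substructure M) : Set M) := by
      rw [c1]; exact Set.finite_singleton _
    obtain ⟨e⟩ := hage (Substructure.closure L {m0}) hfin.to_subtype ⟨Substructure.subtype _⟩
    exact ⟨e ⟨m0, Substructure.subset_closure rfl⟩⟩
  have : Nonempty M := ⟨m0⟩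
  obtain ⟨φ, hφ⟩ := exists_surjective_nat M
  let S : ℕ → Set M := fun k => (A : Set M) ∪ φ '' Set.Iio k
  have hS : ∀ k, (S k).Finite := fun k => hA.union ((Set.finite_Iio k).image _)
  have hmono : Monotone S := fun i j hij =>
    Set.union_subset_union_right _ (Set.image_mono (Set.Iio_subset_Iio hij))
  let p0 : M → N := fun m => if hm : m ∈ A then f ⟨m, hm⟩ else n0
  have hp0 : PartHom L (S 0) p0 := by
    intro n r x hx hr
    have hx' : ∀ i, x i ∈ A := fun i => by simpa [S] using hx i
    have := (f.map_rel r (fun i => (⟨x i, hx' i⟩ : A))).2 hr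
    convert this using 1
    funext i
    simp [p0, hx' i]
  have step := fun k (p : {p : M → N // PartHom L (S k) p}) =>
    PartHom_step L hN hage (S k) (S (k+1)) (hS _) (hmono k.le_succ) p.1 p.2
  choose q hq hqe using step
  let P : ∀ k, {p : M → N // PartHom L (S k) p} := fun k =>
    Nat.rec ⟨p0, hp0⟩ (fun k p => ⟨q k p, hq k p⟩) k
  have hP : ∀ k, ∀ s ∈ S k, (P (k+1)).1 s = (P k).1 s := fun k s hs => hqe k (P k) s hs
  have hP' : ∀ k j, k ≤ j → ∀ s ∈ S k, (P j).1 s = (P k).1 s := by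
    intro k j hkj s hs
    induction j, hkj using Nat.le_induction with
    | base => rfl
    | succ j hkj ih => rw [hP j s (hmono hkj hs), ih]
  choose ι hι using hφ
  have hmem : ∀ m, m ∈ S (ι m + 1) := fun m => Or.inr ⟨ι m, by simp, hι m⟩
  refine ⟨{ toFun := fun m => (P (ι m + 1)).1 m
            map_fun' := fun f => isEmptyElim f
            map_rel' := ?_ }, ?_⟩
  · intro n r x hr
    let K := Finset.univ.sup (fun i => ι (x i) + 1)
    have hK : ∀ i, ι (x i) + 1 ≤ K := fun i =>
      Finset.le_sup (f := fun i => ι (x i) + 1) (Finset.mem_univ i)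
    have := (P K).2 n r x (fun i => hmono (hK i) (hmem _)) hr
    convert this using 1
    funext i
    exact (hP' _ _ (hK i) _ (hmem _)).symm
  · intro a
    have h0 : (a : M) ∈ S 0 := Or.inl a.2
    change (P (ι (a : M) + 1)).1 (a : M) = f a
    refine (hP' 0 _ (Nat.zero_le _) _ h0).trans ?_
    change p0 a = f a
    simp [p0]

theorem h_equivalent_of_hh_homogeneous (L : FirstOrder.Language.{u, v}) [L.IsRelational]
    (M N : Type w) [L.Structure M] [L.Structure N] [Countable M] [Countable N]
    (hM : IsHHHomogeneous L M) (hN : IsHHHomogeneous L N)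
    (hage : ∀ (B : Type w) [L.Structure B], Finite B →
      (Nonempty (B ↪[L] M) ↔ Nonempty (B ↪[L] N))) :
    HomExtendable L M N ∧ HomExtendable L N M := by
  exact ⟨HomExt_of L hN fun B _ hB => (hage B hB).1, HomExt_of L hM fun B _ hB => (hage B hB).2⟩
end

section
/- Let σ be a relational first-order language and let M be a countable σ-structure. Then M is MB-homogeneous if and only if M has both the MM-extension property (MMEP) and the anti-MM-extension property: for every finite σ-structure B in Age(M), every substructure A of B, and every antimonomorphism f : A → M, there exists an antimonomorphism g : B → M whose restriction to A equals f. -/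
open FirstOrder Language Structure

universe u v w

variable {L : FirstOrder.Language.{u, v}}

/-- An antimonomorphism is an injective map that preserves non-relations. -/
def IsAntimonomorphism (L : FirstOrder.Language.{u, v}) {A : Type*} {B : Type*}
    [L.Structure A] [L.Structure B] (f : A → B) : Prop :=
  Function.Injective f ∧
    ∀ ⦃n : ℕ⦄ (r : L.Relations n) (x : Fin n → A),
      ¬ RelMap r x → ¬ RelMap r (f ∘ x)

/-- `M` is MB-homogeneous: every monomorphism between finite substructures of `M`
extends to a bijective endomorphism of `M`. -/
def IsMBHomogeneous (L : FirstOrder.Language.{u, v}) (M : Type w) [L.Structure M] : Prop :=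
  ∀ (A B : L.Substructure M), (A : Set M).Finite → (B : Set M).Finite →
    ∀ f : A →[L] B, Function.Injective f →
      ∃ g : M →[L] M, Function.Bijective g ∧ ∀ a : A, g (a : M) = (f a : M)

/-- `M` has the anti-MM-extension property: antimonomorphisms from substructures of members
of the age of `M` into `M` extend to antimonomorphisms of the larger structure. -/
def HasAntiMMEP (L : FirstOrder.Language.{u, v}) (M : Type w) [L.Structure M] : Prop :=
  ∀ (B : Type w) [L.Structure B], Finite B → Nonempty (B ↪[L] M) →
    ∀ (A : L.Substructure B) (f : A → M), IsAntimonomorphism L f →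
      ∃ g : B → M, IsAntimonomorphism L g ∧ ∀ a : A, g (a : B) = f a

/-- `S` is (the graph of) a partial monomorphism of `M`. -/
def PartialMono (L : FirstOrder.Language.{u, v}) (M : Type w) [L.Structure M]
    (S : Set (M × M)) : Prop :=
  (∀ p ∈ S, ∀ q ∈ S, p.1 = q.1 ↔ p.2 = q.2) ∧
    ∀ ⦃n : ℕ⦄ (r : L.Relations n) (x y : Fin n → M),
      (∀ i, (x i, y i) ∈ S) → RelMap r x → RelMap r y

theorem mb_partial {L : FirstOrder.Language.{u, v}} [L.IsRelational]
    {M : Type w} [L.Structure M] (h : IsMBHomogeneous L M) (S : Set (M × M))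
    (hf : S.Finite) (hS : PartialMono L M S) :
    ∃ g : M →[L] M, Function.Bijective g ∧ ∀ p ∈ S, g p.1 = p.2 := by
  let A : L.Substructure M := Substructure.closure L (Prod.fst '' S)
  let B : L.Substructure M := Substructure.closure L (Prod.snd '' S)
  have hA : (A : Set M) = Prod.fst '' S := Substructure.closure_eq_of_isRelational L _
  have hB : (B : Set M) = Prod.snd '' S := Substructure.closure_eq_of_isRelational L _
  have h1 : ∀ a : A, ∃ y : B, ((a : M), (y : M)) ∈ S := by
    rintro ⟨a, ha⟩
    have ha' : a ∈ (A : Set M) := ha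
    rw [hA] at ha'
    obtain ⟨p, hp, rfl⟩ := ha'
    have hb : p.2 ∈ (B : Set M) := by rw [hB]; exact ⟨p, hp, rfl⟩
    exact ⟨⟨p.2, hb⟩, hp⟩
  choose f hfS using h1
  let F : A →[L] B :=
    { toFun := f
      map_fun' := fun {n} c => isEmptyElim c
      map_rel' := fun {n} r x hx => hS.2 r (fun i => (x i : M)) (fun i => (f (x i) : M))
        (fun i => hfS (x i)) hx }
  obtain ⟨g, hg, hg2⟩ := h A B (hA ▸ hf.image _) (hB ▸ hf.image _) F (by
    intro a b hab
    have : (f a : M) = f b := congrArg Subtype.val hab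
    exact Subtype.ext ((hS.1 _ (hfS a) _ (hfS b)).2 this))
  refine ⟨g, hg, fun p hp => ?_⟩
  have ha : p.1 ∈ (A : Set M) := by rw [hA]; exact ⟨p, hp, rfl⟩
  have := hg2 ⟨p.1, ha⟩
  refine this.trans ?_
  exact (hS.1 _ (hfS ⟨p.1, ha⟩) _ hp).1 rfl

theorem mmep_partial {L : FirstOrder.Language.{u, v}} [L.IsRelational]
    {M : Type w} [L.Structure M] (h : HasMMEP L M) (S : Set (M × M))
    (hf : S.Finite) (hS : PartialMono L M S) (m : M) :
    ∃ T : Set (M × M), S ⊆ T ∧ T.Finite ∧ PartialMono L M T ∧ ∃ m', (m, m') ∈ T := by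
  let B : L.Substructure M := Substructure.closure L (insert m (Prod.fst '' S))
  have hB : (B : Set M) = insert m (Prod.fst '' S) := Substructure.closure_eq_of_isRelational L _
  let A0 : L.Substructure M := Substructure.closure L (Prod.fst '' S)
  have hA0 : (A0 : Set M) = Prod.fst '' S := Substructure.closure_eq_of_isRelational L _
  let A : L.Substructure B := A0.comap B.subtype.toHom
  have hBf : Finite B := by
    have : (B : Set M).Finite := by rw [hB]; exact (hf.image _).insert _
    exact this
  have h1 : ∀ a : A, ∃ y : M, (((a : B) : M), y) ∈ S := by
    rintro ⟨⟨a, ha⟩, ha1⟩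
    have ha' : a ∈ (A0 : Set M) := ha1
    rw [hA0] at ha'
    obtain ⟨p, hp, rfl⟩ := ha'
    exact ⟨p.2, hp⟩
  choose f hfS using h1
  let F : A →[L] M :=
    { toFun := f
      map_fun' := fun {n} c => isEmptyElim c
      map_rel' := fun {n} r x hx => hS.2 r (fun i => ((x i : B) : M)) (fun i => f (x i))
        (fun i => hfS (x i)) hx }
  obtain ⟨g, hg, hg2⟩ := h B hBf ⟨B.subtype⟩ A F (by
    intro a b hab
    exact Subtype.ext (Subtype.ext ((hS.1 _ (hfS a) _ (hfS b)).2 hab)))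
  have hmB : m ∈ (B : Set M) := by rw [hB]; exact Set.mem_insert _ _
  refine ⟨Set.range (fun b : B => ((b : M), g b)), ?_, Set.finite_range _, ⟨?_, ?_⟩,
    g ⟨m, hmB⟩, ⟨⟨m, hmB⟩, rfl⟩⟩
  · intro p hp
    have hb : p.1 ∈ (B : Set M) := by rw [hB]; exact Or.inr ⟨p, hp, rfl⟩
    have ha : p.1 ∈ (A0 : Set M) := by rw [hA0]; exact ⟨p, hp, rfl⟩
    have ha' : (⟨p.1, hb⟩ : B) ∈ A := ha
    refine ⟨⟨p.1, hb⟩, Prod.ext rfl ?_⟩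
    exact (hg2 ⟨_, ha'⟩).trans ((hS.1 _ (hfS ⟨_, ha'⟩) _ hp).1 rfl)
  · rintro _ ⟨b, rfl⟩ _ ⟨c, rfl⟩
    exact ⟨fun e => congrArg g (Subtype.ext e), fun e => congrArg Subtype.val (hg e)⟩
  · intro n r x y hxy hx
    choose b hb using hxy
    have e1 : x = fun i => (b i : M) := funext fun i => (congrArg Prod.fst (hb i)).symm
    have e2 : y = fun i => g (b i) := funext fun i => (congrArg Prod.snd (hb i)).symm
    subst e2
    rw [e1] at hx
    exact g.map_rel r b hx

theorem antiMmep_partial {L : FirstOrder.Language.{u, v}} [L.IsRelational]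
    {M : Type w} [L.Structure M] (h : HasAntiMMEP L M) (S : Set (M × M))
    (hf : S.Finite) (hS : PartialMono L M S) (m : M) :
    ∃ T : Set (M × M), S ⊆ T ∧ T.Finite ∧ PartialMono L M T ∧ ∃ m', (m', m) ∈ T := by
  let B : L.Substructure M := Substructure.closure L (insert m (Prod.snd '' S))
  have hB : (B : Set M) = insert m (Prod.snd '' S) := Substructure.closure_eq_of_isRelational L _
  let A0 : L.Substructure M := Substructure.closure L (Prod.snd '' S)
  have hA0 : (A0 : Set M) = Prod.snd '' S := Substructure.closure_eq_of_isRelational L _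
  let A : L.Substructure B := A0.comap B.subtype.toHom
  have hBf : Finite B := by
    have : (B : Set M).Finite := by rw [hB]; exact (hf.image _).insert _
    exact this
  have h1 : ∀ a : A, ∃ y : M, (y, ((a : B) : M)) ∈ S := by
    rintro ⟨⟨a, ha⟩, ha1⟩
    have ha' : a ∈ (A0 : Set M) := ha1
    rw [hA0] at ha'
    obtain ⟨p, hp, rfl⟩ := ha'
    exact ⟨p.1, hp⟩
  choose f hfS using h1
  obtain ⟨g, ⟨hg, hg3⟩, hg2⟩ := h B hBf ⟨B.subtype⟩ A f ⟨by
    intro a b hab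
    exact Subtype.ext (Subtype.ext ((hS.1 _ (hfS a) _ (hfS b)).1 hab)),
    fun n r x hx hx2 => hx (hS.2 r (fun i => f (x i)) (fun i => ((x i : B) : M))
      (fun i => hfS (x i)) hx2)⟩
  have hmB : m ∈ (B : Set M) := by rw [hB]; exact Set.mem_insert _ _
  refine ⟨Set.range (fun b : B => (g b, (b : M))), ?_, Set.finite_range _, ⟨?_, ?_⟩,
    g ⟨m, hmB⟩, ⟨⟨m, hmB⟩, rfl⟩⟩
  · intro p hp
    have hb : p.2 ∈ (B : Set M) := by rw [hB]; exact Or.inr ⟨p, hp, rfl⟩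
    have ha : p.2 ∈ (A0 : Set M) := by rw [hA0]; exact ⟨p, hp, rfl⟩
    have ha' : (⟨p.2, hb⟩ : B) ∈ A := ha
    refine ⟨⟨p.2, hb⟩, Prod.ext ?_ rfl⟩
    exact (hg2 ⟨_, ha'⟩).trans ((hS.1 _ (hfS ⟨_, ha'⟩) _ hp).2 rfl)
  · rintro _ ⟨b, rfl⟩ _ ⟨c, rfl⟩
    exact ⟨fun e => congrArg Subtype.val (hg e), fun e => congrArg g (Subtype.ext e)⟩
  · intro n r x y hxy hx
    choose b hb using hxy
    have e1 : x = g ∘ b := funext fun i => (congrArg Prod.fst (hb i)).symm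
    have e2 : y = fun i => (b i : M) := funext fun i => (congrArg Prod.snd (hb i)).symm
    subst e2
    rw [e1] at hx
    by_contra hc
    exact hg3 r b hc hx

theorem back_and_forth {L : FirstOrder.Language.{u, v}} [L.IsRelational]
    {M : Type w} [L.Structure M] [Countable M]
    (h1 : HasMMEP L M) (h2 : HasAntiMMEP L M) (S : Set (M × M))
    (hf : S.Finite) (hS : PartialMono L M S) :
    ∃ g : M →[L] M, Function.Bijective g ∧ ∀ p ∈ S, g p.1 = p.2 := by
  let P := {T : Set (M × M) // T.Finite ∧ PartialMono L M T}
  let D : M ⊕ M → Order.Cofinal P := Sum.elim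
    (fun m => ⟨{T | ∃ m', (m, m') ∈ T.1}, fun T => by
      obtain ⟨T', a, b, c, d⟩ := mmep_partial h1 T.1 T.2.1 T.2.2 m
      exact ⟨⟨T', b, c⟩, d, a⟩⟩)
    (fun m => ⟨{T | ∃ m', (m', m) ∈ T.1}, fun T => by
      obtain ⟨T', a, b, c, d⟩ := antiMmep_partial h2 T.1 T.2.1 T.2.2 m
      exact ⟨⟨T', b, c⟩, d, a⟩⟩)
  have : Encodable (M ⊕ M) := Encodable.ofCountable _
  let I := Order.idealOfCofinals (⟨S, hf, hS⟩ : P) D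
  have hSI : (⟨S, hf, hS⟩ : P) ∈ I := Order.mem_idealOfCofinals _ D
  have hdir : ∀ (n : ℕ) (t : Fin n → P), (∀ i, t i ∈ I) → ∃ T ∈ I, ∀ i, t i ≤ T := by
    intro n t ht
    haveI : Nonempty I := ⟨⟨_, hSI⟩⟩
    have hd : Directed (· ≤ ·) (fun a : I => a) := by
      rintro ⟨a, ha⟩ ⟨b, hb⟩
      obtain ⟨c, hc, hac, hbc⟩ := I.directed a ha b hb
      exact ⟨⟨c, hc⟩, hac, hbc⟩
    obtain ⟨z, hz⟩ := hd.finite_le (fun i => (⟨t i, ht i⟩ : I))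
    exact ⟨z.1, z.2, fun i => hz i⟩
  have hx : ∀ m, ∃ m', ∃ T ∈ I, (m, m') ∈ T.1 := by
    intro m
    obtain ⟨T, ⟨m', hT⟩, hT2⟩ := Order.cofinal_meets_idealOfCofinals (⟨S, hf, hS⟩ : P) D (Sum.inl m)
    exact ⟨m', T, hT2, hT⟩
  have hy : ∀ m, ∃ m', ∃ T ∈ I, (m', m) ∈ T.1 := by
    intro m
    obtain ⟨T, ⟨m', hT⟩, hT2⟩ := Order.cofinal_meets_idealOfCofinals (⟨S, hf, hS⟩ : P) D (Sum.inr m)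
    exact ⟨m', T, hT2, hT⟩
  have hU : PartialMono L M {p | ∃ T ∈ I, p ∈ T.1} := by
    constructor
    · rintro p ⟨T, hT, hp⟩ q ⟨T', hT', hq⟩
      obtain ⟨c, hc, hac, hbc⟩ := I.directed T hT T' hT'
      exact c.2.2.1 p (hac hp) q (hbc hq)
    · intro n r x y hxy hr
      choose t ht hxt using hxy
      obtain ⟨T, hT, hle⟩ := hdir n t ht
      exact T.2.2.2 r x y (fun i => hle i (hxt i)) hr
  choose g hg using hx
  refine ⟨{ toFun := g
            map_fun' := fun {n} c => isEmptyElim c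
            map_rel' := fun {n} r x hr => hU.2 r x (g ∘ x) (fun i => hg (x i)) hr },
    ⟨fun a b hab => (hU.1 _ (hg a) _ (hg b)).2 hab, fun m => ?_⟩, fun p hp => ?_⟩
  · obtain ⟨m', hm'⟩ := hy m
    exact ⟨m', (hU.1 _ (hg m') _ hm').1 rfl⟩
  · exact (hU.1 _ (hg p.1) p ⟨_, hSI, hp⟩).1 rfl

theorem mb_homogeneous_iff_mmep_and_antiMMEP (L : FirstOrder.Language.{u, v}) [L.IsRelational]
    (M : Type w) [L.Structure M] [Countable M] :
    IsMBHomogeneous L M ↔ (HasMMEP L M ∧ HasAntiMMEP L M) := by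
  constructor
  · intro h
    constructor
    · rintro B _ hB ⟨e⟩ A f hf
      obtain ⟨g, hg, hg2⟩ := mb_partial h (Set.range fun a : A => (e a, f a))
        (Set.finite_range _) ⟨by
          rintro _ ⟨b, rfl⟩ _ ⟨c, rfl⟩
          exact ⟨fun k => congrArg f (Subtype.ext (e.injective k)),
            fun k => congrArg (fun a : A => e a) (hf k)⟩, by
          intro n r x y hxy hx
          choose b hb using hxy
          have e1 : x = e ∘ (fun i => (b i : B)) :=
            funext fun i => (congrArg Prod.fst (hb i)).symm
          have e2 : y = f ∘ b := funext fun i => (congrArg Prod.snd (hb i)).symm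
          subst e2
          rw [e1, e.map_rel] at hx
          exact f.map_rel r b hx⟩
      exact ⟨g.comp e.toHom, hg.1.comp e.injective, fun a => hg2 _ ⟨a, rfl⟩⟩
    · rintro B _ hB ⟨e⟩ A f ⟨hf, hf2⟩
      obtain ⟨g, hg, hg2⟩ := mb_partial h (Set.range fun a : A => (f a, e a))
        (Set.finite_range _) ⟨by
          rintro _ ⟨b, rfl⟩ _ ⟨c, rfl⟩
          exact ⟨fun k => congrArg (fun a : A => e a) (hf k),
            fun k => congrArg f (Subtype.ext (e.injective k))⟩, by
          intro n r x y hxy hx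
          choose b hb using hxy
          have e2 : y = e ∘ (fun i => (b i : B)) :=
            funext fun i => (congrArg Prod.snd (hb i)).symm
          have e1 : x = f ∘ b := funext fun i => (congrArg Prod.fst (hb i)).symm
          subst e1
          rw [e2, e.map_rel]
          by_contra hc
          exact hf2 r b hc hx⟩
      let G := Equiv.ofBijective g hg
      refine ⟨fun b => G.symm (e b), ⟨G.symm.injective.comp e.injective, ?_⟩, fun a => ?_⟩
      · intro n r x hx hx2
        apply hx
        have h3 := g.map_rel r _ hx2
        rw [← e.map_rel]
        convert h3 using 1
        funext i
        exact (G.apply_symm_apply (e (x i))).symm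
      · rw [Equiv.symm_apply_eq]
        exact (hg2 _ ⟨a, rfl⟩).symm
  · rintro ⟨h1, h2⟩ A B hA hB f hf
    have : Finite A := hA
    obtain ⟨g, hg, hg2⟩ := back_and_forth h1 h2 (Set.range fun a : A => ((a : M), (f a : M)))
      (Set.finite_range _) ⟨by
        rintro _ ⟨b, rfl⟩ _ ⟨c, rfl⟩
        exact ⟨fun k => congrArg (fun a => (f a : M)) (Subtype.ext k),
          fun k => congrArg Subtype.val (hf (Subtype.ext k))⟩, by
        intro n r x y hxy hx
        choose b hb using hxy
        have e1 : x = fun i => (b i : M) := funext fun i => (congrArg Prod.fst (hb i)).symm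
        have e2 : y = fun i => (f (b i) : M) := funext fun i => (congrArg Prod.snd (hb i)).symm
        rw [e1] at hx
        subst e2
        exact f.map_rel r b hx⟩
    exact ⟨g, hg, fun a => hg2 _ ⟨a, rfl⟩⟩
end

section
/- Let σ be a relational first-order language and let M be a countable σ-structure. Then M is HE-homogeneous if and only if M has both the HH-extension property (HHEP) and the following anti-HH-extension property: for every finite σ-structure B in Age(M), every substructure A of B, every finite substructure A' of M, and every surjective homomorphism h : A' → A, there exist a finite substructure B' of M containing A' and a surjective homomorphism h' : B' → B such that h' agrees with h on A' and h' maps every element of B' \ A' into B \ A. -/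
open FirstOrder Language Structure

universe u v w

variable {L : FirstOrder.Language.{u, v}}

/-- `M` is HE-homogeneous: every homomorphism between finite substructures of `M`
extends to a surjective endomorphism of `M`. -/
def IsHEHomogeneous (L : FirstOrder.Language.{u, v}) (M : Type w) [L.Structure M] : Prop :=
  ∀ (A B : L.Substructure M), (A : Set M).Finite → (B : Set M).Finite →
    ∀ f : A →[L] B, ∃ g : M →[L] M, Function.Surjective g ∧ ∀ a : A, g (a : M) = (f a : M)

/-- `M` has the anti-HH-extension property: for every finite structure `B` in the age of `M`,
every substructure `A` of `B`, every finite substructure `A'` of `M` and every surjective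
homomorphism `h : A' → A`, there are a finite substructure `B'` of `M` containing `A'` and a
surjective homomorphism `h' : B' → B` agreeing with `h` on `A'` and mapping `B' \ A'`
into `B \ A`. -/
def HasAntiHHEP (L : FirstOrder.Language.{u, v}) (M : Type w) [L.Structure M] : Prop :=
  ∀ (B : Type w) [L.Structure B], Finite B → Nonempty (B ↪[L] M) →
    ∀ (A : L.Substructure B) (A' : L.Substructure M), (A' : Set M).Finite →
      ∀ h : A' →[L] A, Function.Surjective h →
        ∃ (B' : L.Substructure M) (_ : (B' : Set M).Finite) (hle : A' ≤ B')
          (h' : B' →[L] B), Function.Surjective h' ∧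
            (∀ a : A', h' ⟨(a : M), hle a.2⟩ = (h a : B)) ∧
            (∀ b : B', (b : M) ∉ A' → h' b ∉ A)


namespace HEAux

/-- In a relational language, every set is a substructure. -/
def sub (L : FirstOrder.Language.{u, v}) [L.IsRelational] {M : Type w} [L.Structure M]
    (S : Set M) : L.Substructure M where
  carrier := S
  fun_mem := fun f => isEmptyElim f

theorem mem_sub (L : FirstOrder.Language.{u, v}) [L.IsRelational] {M : Type w} [L.Structure M]
    (S : Set M) (x : M) : x ∈ sub L S ↔ x ∈ S := Iff.rfl

/-- `g` preserves relations on tuples from `S`. -/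
def PH (L : FirstOrder.Language.{u, v}) {M : Type w} [L.Structure M] {N : Type w} [L.Structure N]
    (S : Set M) (g : M → N) : Prop :=
  ∀ (n : ℕ) (R : L.Relations n) (x : Fin n → M), (∀ i, x i ∈ S) → RelMap R x →
    RelMap R (fun i => g (x i))

/-- homomorphism from a relation-preserving map -/
def mkHom (L : FirstOrder.Language.{u, v}) [L.IsRelational] {M : Type w} [L.Structure M]
    {N : Type w} [L.Structure N] (g : M → N)
    (hg : ∀ (n : ℕ) (R : L.Relations n) (x : Fin n → M), RelMap R x →
      RelMap R (fun i => g (x i))) : M →[L] N where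
  toFun := g
  map_fun' := fun f => isEmptyElim f
  map_rel' := fun {n} R x h => hg n R x h

theorem PH_of_hom {L : FirstOrder.Language.{u, v}} {M : Type w} [L.Structure M]
    {N : Type w} [L.Structure N] (A : L.Substructure M) (f : A →[L] N) (g : M → N)
    (h : ∀ a : A, g a = f a) : PH L (A : Set M) g := by
  intro n R x hx hR
  have h1 : RelMap R (fun i => (⟨x i, hx i⟩ : A)) := hR
  have h2 := f.map_rel R _ h1
  convert h2 using 2 with i
  exact h ⟨x i, hx i⟩

/-- extend a function on a substructure to a total one -/
theorem exists_total {M N : Type w} (S : Set M) (f : S → N) (d : M → N) :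
    ∃ g : M → N, ∀ a : S, g a = f a := by
  classical
  refine ⟨fun x => if h : x ∈ S then f ⟨x, h⟩ else d x, fun a => ?_⟩
  simp

section
variable {L : FirstOrder.Language.{u, v}} [L.IsRelational] {M : Type w} [L.Structure M]

theorem hhep_of_he (H : IsHEHomogeneous L M) : HasHHEP L M := by
  intro B _ hB ⟨e⟩ A f
  -- the image of `A`
  let eA : L.Substructure M := sub L ((fun b : B => e b) '' (A : Set B))
  let C : L.Substructure M := sub L (Set.range f)
  have hA : ∀ y : eA, ∃ a : A, e (a : B) = (y : M) := by
    rintro ⟨y, a, ha, rfl⟩; exact ⟨⟨a, ha⟩, rfl⟩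
  choose r hr using hA
  have hrel : ∀ (n : ℕ) (R : L.Relations n) (x : Fin n → eA), RelMap R x →
      RelMap R (fun i => (⟨f (r (x i)), ⟨r (x i), rfl⟩⟩ : C)) := by
    intro n R x hx
    have h1 : RelMap R (fun i => ((x i : eA) : M)) := hx
    have h2 : RelMap R (fun i => e ((r (x i) : A) : B)) := by
      simpa only [hr] using h1
    have h3 : RelMap R (fun i => ((r (x i) : A) : B)) := (e.map_rel R _).1 h2
    have h4 : RelMap R (fun i => r (x i)) := h3
    exact f.map_rel R _ h4
  obtain ⟨g, -, hg⟩ := H eA C (Set.toFinite _ : (((fun b : B => e b) '' (A : Set B))).Finite)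
    (Set.toFinite (Set.range f)) (mkHom L (fun y => (⟨f (r y), ⟨r y, rfl⟩⟩ : C)) hrel)
  refine ⟨g.comp e.toHom, fun a => ?_⟩
  have h1 := hg ⟨e (a : B), a, a.2, rfl⟩
  refine h1.trans ?_
  change f (r ⟨e (a : B), _⟩) = f a
  congr 1
  apply Subtype.ext
  apply e.injective
  exact hr _

theorem anti_of_he (H : IsHEHomogeneous L M) : HasAntiHHEP L M := by
  intro B _ hB ⟨e⟩ A A' hA' h hs
  let C : L.Substructure M := sub L (Set.range e)
  have hrel : ∀ (n : ℕ) (R : L.Relations n) (x : Fin n → A'), RelMap R x →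
      RelMap R (fun i => (⟨e (h (x i) : B), ⟨_, rfl⟩⟩ : C)) := by
    intro n R x hx
    have h1 := h.map_rel R _ hx
    have h2 : RelMap R (fun i => (h (x i) : B)) := h1
    exact (e.map_rel R _).2 h2
  obtain ⟨g, hgs, hg⟩ := H A' C hA' (Set.toFinite (Set.range e)) (mkHom L (fun y => (⟨e (h y : B), ⟨_, rfl⟩⟩ : C)) hrel)
  have hg' : ∀ a : A', g a = e (h a : B) := hg
  choose p hp using fun b : B => hgs (e b)
  let S : Set M := (A' : Set M) ∪ p '' (A : Set B)ᶜ
  have hS : ∀ y : sub L S, ∃ b : B, e b = g y := by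
    rintro ⟨y, hy | ⟨b, hb, rfl⟩⟩
    · exact ⟨_, (hg' ⟨y, hy⟩).symm⟩
    · exact ⟨b, (hp b).symm⟩
  choose q hq using hS
  have hrel' : ∀ (n : ℕ) (R : L.Relations n) (x : Fin n → sub L S), RelMap R x →
      RelMap R (fun i => q (x i)) := by
    intro n R x hx
    have h1 : RelMap R (fun i => ((x i : sub L S) : M)) := hx
    have h2 := g.map_rel R _ h1
    refine (e.map_rel R _).1 ?_
    convert h2 using 2
    exact funext fun i => hq _
  have hle : A' ≤ sub L S := fun x hx => Or.inl hx
  have hag : ∀ a : A', q ⟨(a : M), hle a.2⟩ = (h a : B) := fun a => by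
    apply e.injective
    rw [hq]
    exact hg' a
  refine ⟨sub L S, hA'.union (Set.toFinite _), hle, mkHom L q hrel', ?_, hag, ?_⟩
  · intro b
    by_cases hb : b ∈ A
    · obtain ⟨a, ha⟩ := hs ⟨b, hb⟩
      exact ⟨⟨a, hle a.2⟩, (hag a).trans (by rw [ha])⟩
    · refine ⟨⟨p b, Or.inr ⟨b, hb, rfl⟩⟩, ?_⟩
      apply e.injective
      exact (hq _).trans (hp b)
  · rintro ⟨y, hy | ⟨b, hb, rfl⟩⟩ hn
    · exact absurd hy hn
    · change q _ ∉ A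
      have : q ⟨p b, Or.inr ⟨b, hb, rfl⟩⟩ = b := by
        apply e.injective
        exact (hq _).trans (hp b)
      rw [this]; exact hb

theorem forth (H : HasHHEP L M) (S : Set M) (hS : S.Finite) (g : M → M) (hg : PH L S g) (m : M) :
    ∃ k : M → M, PH L (insert m S) k ∧ Set.EqOn g k S := by
  let B := sub L (insert m S)
  have hB : Finite B := (hS.insert m).to_subtype
  let A : L.Substructure B := sub L {b | (b : M) ∈ S}
  obtain ⟨f, hf⟩ := H B hB ⟨B.subtype⟩ A (mkHom L (fun a : A => g ((a : B) : M)) (by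
    intro n R x hx
    exact hg n R (fun i => ((x i : B) : M)) (fun i => (x i).2) hx))
  obtain ⟨k, hk⟩ := exists_total (insert m S) (fun a => f a) id
  refine ⟨k, PH_of_hom B f k hk, fun x hx => ?_⟩
  exact ((hk ⟨x, Or.inr hx⟩).trans (hf ⟨⟨x, Or.inr hx⟩, hx⟩)).symm

theorem back (H : HasAntiHHEP L M) (S : Set M) (hS : S.Finite) (g : M → M) (hg : PH L S g)
    (m : M) : ∃ (T : Set M) (k : M → M), T.Finite ∧ PH L T k ∧ S ⊆ T ∧ Set.EqOn g k S ∧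
      m ∈ k '' T := by
  let B := sub L (insert m (g '' S))
  have hB : Finite B := ((hS.image g).insert m).to_subtype
  let A : L.Substructure B := sub L {b | (b : M) ∈ g '' S}
  obtain ⟨B', hB', hle, h', hs, hag, -⟩ := H B hB ⟨B.subtype⟩ A (sub L S) hS
    (mkHom L (fun a : sub L S =>
      (⟨⟨g a, Or.inr ⟨a, a.2, rfl⟩⟩, ⟨a, a.2, rfl⟩⟩ : A)) (by
        intro n R x hx
        exact hg n R (fun i => (x i : M)) (fun i => (x i).2) hx))
    (by
      rintro ⟨⟨y, hy⟩, ⟨a, ha, hay⟩⟩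
      refine ⟨⟨a, ha⟩, ?_⟩
      apply Subtype.ext; apply Subtype.ext
      exact hay)
  obtain ⟨k, hk⟩ := exists_total (B' : Set M) (fun a => ((h' a : B) : M)) id
  refine ⟨B', k, hB', PH_of_hom B' (B.subtype.toHom.comp h') k hk, hle, fun x hx => ?_, ?_⟩
  · exact ((hk ⟨x, hle hx⟩).trans (congrArg Subtype.val (hag ⟨x, hx⟩))).symm
  · obtain ⟨b, hb⟩ := hs ⟨m, Or.inl rfl⟩
    exact ⟨b, b.2, (hk b).trans (congrArg Subtype.val hb)⟩

/-- finite partial homomorphisms -/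
def St (L : FirstOrder.Language.{u, v}) (M : Type w) [L.Structure M] :=
  {p : Set M × (M → M) // p.1.Finite ∧ PH L p.1 p.2}

theorem step (H1 : HasHHEP L M) (H2 : HasAntiHHEP L M) (m : M) (s : St L M) :
    ∃ t : St L M, s.1.1 ⊆ t.1.1 ∧ Set.EqOn s.1.2 t.1.2 s.1.1 ∧ m ∈ t.1.1 ∧
      m ∈ t.1.2 '' t.1.1 := by
  obtain ⟨⟨S, g⟩, hS, hg⟩ := s
  obtain ⟨k, hk, hgk⟩ := forth H1 S hS g hg m
  obtain ⟨T, l, hT, hl, hST, hkl, hm⟩ := back H2 _ (hS.insert m) k hk m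
  exact ⟨⟨(T, l), hT, hl⟩, fun x hx => hST (Or.inr hx),
    fun x hx => (hgk hx).trans (hkl (Or.inr hx)), hST (Or.inl rfl), hm⟩

theorem he_of [Countable M] (H1 : HasHHEP L M) (H2 : HasAntiHHEP L M) : IsHEHomogeneous L M := by
  intro A B hA hB f
  rcases isEmpty_or_nonempty M with hM | hM
  · exact ⟨Hom.id L M, fun x => ⟨x, rfl⟩, fun a => isEmptyElim (a : M)⟩
  obtain ⟨en, hen⟩ := exists_surjective_nat M
  obtain ⟨g0, hg0⟩ := exists_total (A : Set M) (fun a => ((f a : B) : M)) id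
  choose nx h1 h2 h3 h4 using step (L := L) (M := M) H1 H2
  let s0 : St L M := ⟨((A : Set M), g0), hA, PH_of_hom A (B.subtype.toHom.comp f) g0 hg0⟩
  let s : ℕ → St L M := fun n => Nat.rec s0 (fun n t => nx (en n) t) n
  have hs : ∀ n, s (n + 1) = nx (en n) (s n) := fun n => rfl
  have hmono : ∀ n d, (s n).1.1 ⊆ (s (n + d)).1.1 ∧
      Set.EqOn (s n).1.2 (s (n + d)).1.2 (s n).1.1 := by
    intro n d
    induction d with
    | zero => exact ⟨subset_rfl, fun x _ => rfl⟩
    | succ d ih =>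
      have e : s (n + (d + 1)) = nx (en (n + d)) (s (n + d)) := rfl
      rw [e]
      exact ⟨ih.1.trans (h1 _ _), fun x hx => (ih.2 hx).trans (h2 _ _ (ih.1 hx))⟩
  have hcov : ∀ x, ∃ n, x ∈ (s n).1.1 := by
    intro x
    obtain ⟨n, rfl⟩ := hen x
    exact ⟨n + 1, h3 _ _⟩
  choose N hN using hcov
  let G : M → M := fun x => (s (N x)).1.2 x
  have hG : ∀ n x, x ∈ (s n).1.1 → G x = (s n).1.2 x := by
    intro n x hx
    rcases le_total n (N x) with h | h
    · obtain ⟨d, hd⟩ := Nat.exists_eq_add_of_le h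
      change (s (N x)).1.2 x = _
      rw [hd]
      exact ((hmono n d).2 hx).symm
    · obtain ⟨d, rfl⟩ := Nat.exists_eq_add_of_le h
      exact (hmono (N x) d).2 (hN x)
  have hrel : ∀ (n : ℕ) (R : L.Relations n) (x : Fin n → M), RelMap R x →
      RelMap R (fun i => G (x i)) := by
    intro n R x hx
    let K := Finset.univ.sup fun i => N (x i)
    have hK : ∀ i, x i ∈ (s K).1.1 := by
      intro i
      have h : N (x i) ≤ K := Finset.le_sup (f := fun i => N (x i)) (Finset.mem_univ i)
      obtain ⟨d, hd⟩ := Nat.exists_eq_add_of_le h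
      rw [hd]
      exact (hmono _ d).1 (hN _)
    have h := (s K).2.2 n R x hK hx
    convert h using 2 with i
    exact hG K _ (hK i)
  refine ⟨mkHom L G hrel, ?_, ?_⟩
  · intro m
    obtain ⟨n, rfl⟩ := hen m
    obtain ⟨x, hx, hxm⟩ := h4 (en n) (s n)
    exact ⟨x, (hG (n + 1) x hx).trans hxm⟩
  · intro a
    exact (hG 0 a a.2).trans (hg0 a)

end

end HEAux

theorem he_homogeneous_iff_hhep_and_antiHHEP (L : FirstOrder.Language.{u, v}) [L.IsRelational]
    (M : Type w) [L.Structure M] [Countable M] :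
    IsHEHomogeneous L M ↔ (HasHHEP L M ∧ HasAntiHHEP L M) :=
  ⟨fun H => ⟨HEAux.hhep_of_he H, HEAux.anti_of_he H⟩, fun H => HEAux.he_of H.1 H.2⟩
end

section
/- Let σ be a relational first-order language. If a countable σ-structure M is MB-homogeneous, then Age(M) has both the mono-amalgamation property (MAP) and the bi-amalgamation property (BAP): for all A, B1, B2 in Age(M), every antimonomorphism f1 : A → B1 and every embedding f2 : A → B2, there exist D in Age(M), an embedding g1 : B1 → D, and an antimonomorphism g2 : B2 → D such that g1 ∘ f1 = g2 ∘ f2. -/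
open FirstOrder Language Structure CategoryTheory

universe u v w

variable {L : FirstOrder.Language.{u, v}}

/-- A class of structures has the bi-amalgamation property (BAP). -/
def HasBAP (C : Set (Bundled.{w} L.Structure)) : Prop :=
  ∀ A B₁ B₂ : Bundled.{w} L.Structure, A ∈ C → B₁ ∈ C → B₂ ∈ C →
    ∀ (f₁ : A → B₁), IsAntimonomorphism L f₁ → ∀ (f₂ : A ↪[L] B₂),
      ∃ D ∈ C, ∃ (g₁ : B₁ ↪[L] D) (g₂ : B₂ → D),
        IsAntimonomorphism L g₂ ∧ ∀ a : A, g₁ (f₁ a) = g₂ (f₂ a)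

theorem mb_key (L : FirstOrder.Language.{u, v}) [L.IsRelational] (M : Type w) [L.Structure M]
    (h : IsMBHomogeneous L M) {A : Type w} [Finite A] (p q : A → M)
    (hp : Function.Injective p) (hq : Function.Injective q)
    (hpq : ∀ ⦃n : ℕ⦄ (r : L.Relations n) (x : Fin n → A),
      RelMap r (p ∘ x) → RelMap r (q ∘ x)) :
    ∃ g : M →[L] M, Function.Bijective g ∧ ∀ a, g (p a) = q a := by
  let S : L.Substructure M := ⟨Set.range p, fun {n} f => isEmptyElim f⟩
  let T : L.Substructure M := ⟨Set.range q, fun {n} f => isEmptyElim f⟩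
  have hs : ∀ s : S, ∃ a, p a = s := fun s => s.2
  choose c hc using hs
  let f : S →[L] T :=
    { toFun := fun s => ⟨q (c s), ⟨c s, rfl⟩⟩
      map_fun' := fun {n} f => isEmptyElim f
      map_rel' := by
        intro n r x hx
        have h1 : RelMap r (p ∘ (c ∘ x)) := by
          have : (p ∘ (c ∘ x)) = fun i => (x i : M) := funext fun i => hc (x i)
          rw [this]
          exact hx
        exact hpq r _ h1 }
  have hf : Function.Injective f := by
    intro s t hst
    have h1 : q (c s) = q (c t) := congrArg Subtype.val hst
    have h2 := hq h1
    apply Subtype.ext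
    rw [← hc s, ← hc t, h2]
  obtain ⟨g, hg, hgf⟩ := h S T (Set.finite_range p) (Set.finite_range q) f hf
  refine ⟨g, hg, fun a => ?_⟩
  have h1 := hgf ⟨p a, ⟨a, rfl⟩⟩
  have h2 : c ⟨p a, ⟨a, rfl⟩⟩ = a := hp (hc _)
  change g (p a) = q (c ⟨p a, ⟨a, rfl⟩⟩) at h1
  rw [h1, h2]

theorem mb_union (L : FirstOrder.Language.{u, v}) [L.IsRelational] (M : Type w) [L.Structure M]
    (B₁ B₂ : Type w) [L.Structure B₁] [Finite B₁] [Finite B₂] (e : B₁ ↪[L] M) (k : B₂ → M) :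
    ∃ D ∈ finAge L M, ∃ (j : D ↪[L] M) (g₁ : B₁ ↪[L] D) (g₂ : B₂ → D),
      (∀ b, j (g₁ b) = e b) ∧ ∀ b, j (g₂ b) = k b := by
  let S : L.Substructure M := ⟨Set.range e ∪ Set.range k, fun {n} f => isEmptyElim f⟩
  have hS : Finite S := ((Set.finite_range e).union (Set.finite_range k)).to_subtype
  refine ⟨⟨S, inferInstance⟩, ⟨hS, ⟨S.subtype⟩⟩, S.subtype,
    e.codRestrict S (fun b => Or.inl ⟨b, rfl⟩), fun b => ⟨k b, Or.inr ⟨b, rfl⟩⟩, ?_, ?_⟩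
  · intro b; rfl
  · intro b; rfl

theorem age_hasMAP_and_hasBAP_of_mb_homogeneous (L : FirstOrder.Language.{u, v})
    [L.IsRelational] (M : Type w) [L.Structure M] [Countable M]
    (h : IsMBHomogeneous L M) :
    HasMAP (finAge L M) ∧ HasBAP (finAge L M) := by
  constructor
  · rintro A B₁ B₂ ⟨_, _⟩ ⟨_, ⟨e₁⟩⟩ ⟨_, ⟨e₂⟩⟩ f₁ hf₁ f₂
    obtain ⟨g, hg, hgf⟩ := mb_key L M h (fun a => e₂ (f₂ a)) (fun a => e₁ (f₁ a))
      (e₂.injective.comp f₂.injective) (e₁.injective.comp hf₁) (by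
        intro n r x hx
        have h1 : RelMap r x := by
          rw [← f₂.map_rel, ← e₂.map_rel]; exact hx
        exact (e₁.map_rel r _).2 (f₁.map_rel r x h1))
    obtain ⟨D, hD, j, g₁, g₂, h1, h2⟩ := mb_union L M B₁ B₂ e₁ (fun b => g (e₂ b))
    refine ⟨D, hD, g₁, ⟨g₂, fun {n} f => isEmptyElim f, ?_⟩, ?_, ?_⟩
    · intro n r x hx
      rw [← j.map_rel]
      have : j ∘ g₂ ∘ x = g ∘ e₂ ∘ x := funext fun i => h2 (x i)
      rw [this]
      exact g.map_rel r _ ((e₂.map_rel r x).2 hx)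
    · intro b c hbc
      have h3 : g₂ b = g₂ c := hbc
      apply e₂.injective
      apply hg.1
      rw [← h2, ← h2, h3]
    · intro a
      apply j.injective
      change _ = j (g₂ (f₂ a))
      rw [h1, h2, hgf]
  · rintro A B₁ B₂ ⟨_, _⟩ ⟨_, ⟨e₁⟩⟩ ⟨_, ⟨e₂⟩⟩ f₁ ⟨hf₁, hf₁'⟩ f₂
    obtain ⟨g, hg, hgf⟩ := mb_key L M h (fun a => e₁ (f₁ a)) (fun a => e₂ (f₂ a))
      (e₁.injective.comp hf₁) (e₂.injective.comp f₂.injective) (by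
        intro n r x hx
        have h1 : RelMap r (f₁ ∘ x) := (e₁.map_rel r (f₁ ∘ x)).1 hx
        have h2 : RelMap r x := by
          by_contra h3
          exact hf₁' r x h3 h1
        exact (e₂.map_rel r _).2 ((f₂.map_rel r x).2 h2))
    choose k hk using hg.2
    obtain ⟨D, hD, j, g₁, g₂, h1, h2⟩ := mb_union L M B₁ B₂ e₁ (fun b => k (e₂ b))
    have h4 : ∀ b, g (j (g₂ b)) = e₂ b := fun b => by rw [h2, hk]
    refine ⟨D, hD, g₁, g₂, ⟨?_, ?_⟩, ?_⟩
    · intro b c hbc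
      apply e₂.injective
      rw [← h4, ← h4, hbc]
    · intro n r x hx hx'
      apply hx
      rw [← e₂.map_rel]
      have : e₂ ∘ x = g ∘ j ∘ g₂ ∘ x := funext fun i => (h4 (x i)).symm
      rw [this]
      exact g.map_rel r _ ((j.map_rel r _).2 hx')
    · intro a
      apply j.injective
      apply hg.1
      rw [h1, h4, hgf]
end

section
/- Let σ be a relational first-order language and let M and N be countable MB-homogeneous σ-structures with Age(M) = Age(N). Then M and N are bi-equivalent: every embedding from a finite substructure of M into N extends to a bijective homomorphism M → N, and every embedding from a finite substructure of N into M extends to a bijective homomorphism N → M. -/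
open FirstOrder Language Structure

universe u v w

variable {L : FirstOrder.Language.{u, v}}

/-- Every embedding from a finite substructure of `M` into `N` extends to a
bijective homomorphism `M → N`. -/
def BiExtendable (L : FirstOrder.Language.{u, v}) (M N : Type w)
    [L.Structure M] [L.Structure N] : Prop :=
  ∀ A : L.Substructure M, (A : Set M).Finite →
    ∀ f : A ↪[L] N, ∃ g : M →[L] N, Function.Bijective g ∧ ∀ a : A, g (a : M) = f a

/-- `R` is the graph of a partial monomorphism. -/
def IsPM (L : FirstOrder.Language.{u, v}) {M N : Type w} [L.Structure M] [L.Structure N]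
    (R : Set (M × N)) : Prop :=
  (∀ p ∈ R, ∀ q ∈ R, p.1 = q.1 ↔ p.2 = q.2) ∧
  ∀ (n : ℕ) (r : L.Relations n) (x : Fin n → M) (y : Fin n → N), (∀ i, (x i, y i) ∈ R) →
    RelMap r x → RelMap r y

/-- Composition of relations. -/
def rcomp {M N K : Type w} (R : Set (M × N)) (S : Set (N × K)) : Set (M × K) :=
  {p | ∃ b, (p.1, b) ∈ R ∧ (b, p.2) ∈ S}

theorem IsPM.mono {L : FirstOrder.Language.{u, v}} {M N : Type w} [L.Structure M] [L.Structure N]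
    {R S : Set (M × N)} (h : IsPM L S) (hRS : R ⊆ S) : IsPM L R :=
  ⟨fun p hp q hq => h.1 p (hRS hp) q (hRS hq),
    fun n r x y hxy => h.2 n r x y (fun i => hRS (hxy i))⟩

theorem IsPM.comp {L : FirstOrder.Language.{u, v}} {M N K : Type w} [L.Structure M]
    [L.Structure N] [L.Structure K]
    {R : Set (M × N)} {S : Set (N × K)} (h : IsPM L R) (h' : IsPM L S) : IsPM L (rcomp R S) := by
  refine ⟨?_, ?_⟩
  · rintro p ⟨b, hb, hb'⟩ q ⟨c, hc, hc'⟩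
    exact (h.1 _ hb _ hc).trans (h'.1 _ hb' _ hc')
  · intro n r x y hxy hx
    choose b hb hb' using hxy
    exact h'.2 n r b y hb' (h.2 n r x b hb hx)

theorem isPM_graph {L : FirstOrder.Language.{u, v}} {M N : Type w} [L.Structure M]
    [L.Structure N] (g : M →[L] N) (hg : Function.Injective g) :
    IsPM L {p : M × N | g p.1 = p.2} := by
  refine ⟨?_, ?_⟩
  · rintro ⟨a, b⟩ hp ⟨c, d⟩ hq
    simp only [Set.mem_setOf_eq] at hp hq
    subst hp hq
    exact hg.eq_iff.symm
  · intro n r x y hxy hx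
    have : y = g ∘ x := funext fun i => (hxy i).symm
    rw [this]
    exact g.map_rel r x hx

/-- The substructure on a set, in a relational language. -/
def relSub (L : FirstOrder.Language.{u, v}) [L.IsRelational] {M : Type w} [L.Structure M]
    (S : Set M) : L.Substructure M where
  carrier := S
  fun_mem := fun f => isEmptyElim f

theorem mb_extend (L : FirstOrder.Language.{u, v}) [L.IsRelational] {M : Type w} [L.Structure M]
    (hM : IsMBHomogeneous L M) (R : Set (M × M)) (hR : IsPM L R) (hf : R.Finite) :
    ∃ g : M →[L] M, Function.Bijective g ∧ ∀ p ∈ R, g p.1 = p.2 := by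
  have hex : ∀ a : relSub L (Prod.fst '' R), ∃ b, ((a : M), b) ∈ R := by
    rintro ⟨a, ⟨⟨a', b⟩, hb, rfl⟩⟩
    exact ⟨b, hb⟩
  choose f hf' using hex
  let F : relSub L (Prod.fst '' R) →[L] relSub L (Prod.snd '' R) :=
    { toFun := fun a => ⟨f a, ⟨_, hf' a, rfl⟩⟩
      map_fun' := fun f => isEmptyElim f
      map_rel' := fun {n} r x hx => by
        exact hR.2 n r (fun i => (x i : M)) (fun i => f (x i)) (fun i => hf' (x i)) hx }
  obtain ⟨g, hg, hgF⟩ := hM (relSub L (Prod.fst '' R)) (relSub L (Prod.snd '' R))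
    (hf.image _) (hf.image _) F (by
      intro a b hab
      have h2 : f a = f b := congrArg Subtype.val hab
      exact Subtype.ext ((hR.1 _ (hf' a) _ (hf' b)).2 h2))
  refine ⟨g, hg, fun p hp => ?_⟩
  have h1 := hgF ⟨p.1, ⟨p, hp, rfl⟩⟩
  refine h1.trans ?_
  exact (hR.1 _ (hf' ⟨p.1, ⟨p, hp, rfl⟩⟩) _ hp).1 rfl

theorem age_embed (L : FirstOrder.Language.{u, v}) [L.IsRelational] {M N : Type w}
    [L.Structure M] [L.Structure N]
    (hage : ∀ (B : Type w) [L.Structure B], Finite B → Nonempty (B ↪[L] M) → Nonempty (B ↪[L] N))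
    (S : Set M) (hS : S.Finite) :
    ∃ E : Set (M × N), E.Finite ∧ IsPM L E ∧ IsPM L (Prod.swap ⁻¹' E) ∧
      ∀ a ∈ S, ∃ b, (a, b) ∈ E := by
  have hfin : Finite (relSub L S) := hS
  obtain ⟨e⟩ := hage (relSub L S) hfin ⟨(relSub L S).subtype⟩
  have key : ∀ p ∈ Set.range (fun a : relSub L S => ((a : M), e a)),
      ∀ q ∈ Set.range (fun a : relSub L S => ((a : M), e a)), p.1 = q.1 ↔ p.2 = q.2 := by
    rintro _ ⟨a, rfl⟩ _ ⟨b, rfl⟩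
    exact Subtype.ext_iff.symm.trans e.injective.eq_iff.symm
  have key2 : ∀ (n : ℕ) (r : L.Relations n) (x : Fin n → M) (y : Fin n → N),
      (∀ i, (x i, y i) ∈ Set.range (fun a : relSub L S => ((a : M), e a))) →
      (RelMap r x ↔ RelMap r y) := by
    intro n r x y h
    choose z hz using h
    have hx : x = fun i => (z i : M) := funext fun i => (congrArg Prod.fst (hz i)).symm
    have hy : y = e ∘ z := funext fun i => (congrArg Prod.snd (hz i)).symm
    rw [hx, hy, e.map_rel]
    exact (relSub L S).subtype.map_rel r z
  refine ⟨Set.range (fun a : relSub L S => ((a : M), e a)), Set.finite_range _, ⟨key, ?_⟩,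
    ⟨?_, ?_⟩, ?_⟩
  · exact fun n r x y h => (key2 n r x y h).1
  · exact fun p hp q hq => (key _ hp _ hq).symm
  · exact fun n r x y h => (key2 n r y x h).2
  · exact fun a ha => ⟨e ⟨a, ha⟩, ⟨⟨a, ha⟩, rfl⟩⟩

theorem rcomp_finite {M N K : Type w} {R : Set (M × N)} {S : Set (N × K)} (h : R.Finite)
    (h' : S.Finite) : (rcomp R S).Finite := by
  refine ((h.image Prod.fst).prod (h'.image Prod.snd)).subset ?_
  rintro p ⟨b, hb, hb'⟩
  exact ⟨⟨_, hb, rfl⟩, ⟨_, hb', rfl⟩⟩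

theorem pm_forth (L : FirstOrder.Language.{u, v}) [L.IsRelational] {M N : Type w}
    [L.Structure M] [L.Structure N] (hN : IsMBHomogeneous L N)
    (hage : ∀ (B : Type w) [L.Structure B], Finite B → Nonempty (B ↪[L] M) → Nonempty (B ↪[L] N))
    (R : Set (M × N)) (hf : R.Finite) (hR : IsPM L R) (c : M) :
    ∃ d, IsPM L (insert (c, d) R) := by
  obtain ⟨E, hEf, hE, hE', hES⟩ := age_embed L hage (insert c (Prod.fst '' R))
    ((hf.image _).insert c)
  obtain ⟨g, hg, hgE⟩ := mb_extend L hN (rcomp (Prod.swap ⁻¹' E) R) (hE'.comp hR)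
    (rcomp_finite (hEf.preimage Prod.swap_injective.injOn) hf)
  obtain ⟨b, hb⟩ := hES c (Set.mem_insert _ _)
  refine ⟨g b, (hE.comp (isPM_graph g hg.1)).mono ?_⟩
  rintro p (rfl | hp)
  · exact ⟨b, hb, rfl⟩
  · obtain ⟨b', hb'⟩ := hES p.1 (Or.inr ⟨p, hp, rfl⟩)
    exact ⟨b', hb', hgE (b', p.2) ⟨p.1, hb', hp⟩⟩

theorem pm_back (L : FirstOrder.Language.{u, v}) [L.IsRelational] {M N : Type w}
    [L.Structure M] [L.Structure N] (hM : IsMBHomogeneous L M)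
    (hage : ∀ (B : Type w) [L.Structure B], Finite B → Nonempty (B ↪[L] N) → Nonempty (B ↪[L] M))
    (R : Set (M × N)) (hf : R.Finite) (hR : IsPM L R) (d : N) :
    ∃ c, IsPM L (insert (c, d) R) := by
  obtain ⟨E, hEf, hE, hE', hES⟩ := age_embed L hage (insert d (Prod.snd '' R))
    ((hf.image _).insert d)
  obtain ⟨g, hg, hgE⟩ := mb_extend L hM (rcomp R E) (hR.comp hE) (rcomp_finite hf hEf)
  obtain ⟨b, hb⟩ := hES d (Set.mem_insert _ _)
  obtain ⟨c, hc⟩ := hg.2 b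
  refine ⟨c, ((isPM_graph g hg.1).comp hE').mono ?_⟩
  rintro p (rfl | hp)
  · exact ⟨b, hc, hb⟩
  · obtain ⟨b', hb'⟩ := hES p.2 (Or.inr ⟨p, hp, rfl⟩)
    exact ⟨b', hgE (p.1, b') ⟨p.2, hp, hb'⟩, hb'⟩

theorem biExtendable_aux (L : FirstOrder.Language.{u, v}) [L.IsRelational]
    (M N : Type w) [L.Structure M] [L.Structure N] [Countable M] [Countable N]
    (hM : IsMBHomogeneous L M) (hN : IsMBHomogeneous L N)
    (hage : ∀ (B : Type w) [L.Structure B], Finite B →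
      (Nonempty (B ↪[L] M) ↔ Nonempty (B ↪[L] N))) :
    BiExtendable L M N := by
  classical
  intro A hA f
  let P := {R : Set (M × N) // R.Finite ∧ IsPM L R}
  have hAfin : Finite A := hA
  let R0 : P := ⟨Set.range (fun a : A => ((a : M), f a)), Set.finite_range _, by
    refine ⟨?_, ?_⟩
    · rintro _ ⟨a, rfl⟩ _ ⟨b, rfl⟩
      exact Subtype.ext_iff.symm.trans f.injective.eq_iff.symm
    · intro n r x y h hx
      choose z hz using h
      have hx' : x = fun i => (z i : M) := funext fun i => (congrArg Prod.fst (hz i)).symm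
      have hy : y = f ∘ z := funext fun i => (congrArg Prod.snd (hz i)).symm
      rw [hy, f.map_rel]
      rw [hx'] at hx
      exact hx⟩
  letI : Encodable (M ⊕ N) := Encodable.ofCountable _
  let D : M ⊕ N → Order.Cofinal P := fun s =>
    match s with
    | Sum.inl c =>
      { carrier := {R | ∃ d, (c, d) ∈ R.1}
        isCofinal := fun R => by
          obtain ⟨d, hd⟩ := pm_forth L hN (fun B _ hB => (hage B hB).1) R.1 R.2.1 R.2.2 c
          exact ⟨⟨insert (c, d) R.1, R.2.1.insert _, hd⟩, ⟨d, Set.mem_insert _ _⟩,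
            Set.subset_insert _ _⟩ }
    | Sum.inr d =>
      { carrier := {R | ∃ c, (c, d) ∈ R.1}
        isCofinal := fun R => by
          obtain ⟨c, hc⟩ := pm_back L hM (fun B _ hB => (hage B hB).2) R.1 R.2.1 R.2.2 d
          exact ⟨⟨insert (c, d) R.1, R.2.1.insert _, hc⟩, ⟨c, Set.mem_insert _ _⟩,
            Set.subset_insert _ _⟩ }
  let I := Order.idealOfCofinals R0 D
  have h0 : R0 ∈ I := Order.mem_idealOfCofinals R0 D
  have hforth : ∀ c : M, ∃ d, ∃ R ∈ I, (c, d) ∈ R.1 := fun c => by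
    obtain ⟨R, ⟨d, hd⟩, hRI⟩ := Order.cofinal_meets_idealOfCofinals R0 D (Sum.inl c)
    exact ⟨d, R, hRI, hd⟩
  have hback : ∀ d : N, ∃ c, ∃ R ∈ I, (c, d) ∈ R.1 := fun d => by
    obtain ⟨R, ⟨c, hc⟩, hRI⟩ := Order.cofinal_meets_idealOfCofinals R0 D (Sum.inr d)
    exact ⟨c, R, hRI, hc⟩
  have hdir : ∀ (n : ℕ) (T : Fin n → P), (∀ i, T i ∈ I) → ∃ R ∈ I, ∀ i, T i ≤ R := by
    intro n
    induction n with
    | zero => exact fun T _ => ⟨R0, h0, fun i => i.elim0⟩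
    | succ n ih =>
      intro T hT
      obtain ⟨R, hR, hRT⟩ := ih (fun i => T i.succ) (fun i => hT _)
      obtain ⟨Q, hQ, h1, h2⟩ := I.directed _ hR _ (hT 0)
      exact ⟨Q, hQ, Fin.cases h2 fun i => (hRT i).trans h1⟩
  have hU : IsPM L {p : M × N | ∃ R ∈ I, p ∈ R.1} := by
    refine ⟨?_, ?_⟩
    · rintro p ⟨R, hR, hp⟩ q ⟨S, hS, hq⟩
      obtain ⟨Q, hQ, h1, h2⟩ := I.directed _ hR _ hS
      exact Q.2.2.1 p (h1 hp) q (h2 hq)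
    · intro n r x y h hx
      choose T hT hxy using h
      obtain ⟨Q, hQ, h1⟩ := hdir n T hT
      exact Q.2.2.2 n r x y (fun i => h1 i (hxy i)) hx
  choose g hg using hforth
  refine ⟨{ toFun := g, map_fun' := fun f => isEmptyElim f,
            map_rel' := fun {n} r x hx => hU.2 n r x (g ∘ x) (fun i => hg (x i)) hx }, ⟨?_, ?_⟩, ?_⟩
  · intro a b hab
    exact (hU.1 _ (hg a) _ (hg b)).2 hab
  · intro d
    obtain ⟨c, hc⟩ := hback d
    exact ⟨c, (hU.1 _ (hg c) _ hc).1 rfl⟩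
  · intro a
    exact (hU.1 _ (hg a) ((a : M), f a) ⟨R0, h0, ⟨a, rfl⟩⟩).1 rfl

theorem bi_equivalent_of_mb_homogeneous (L : FirstOrder.Language.{u, v}) [L.IsRelational]
    (M N : Type w) [L.Structure M] [L.Structure N] [Countable M] [Countable N]
    (hM : IsMBHomogeneous L M) (hN : IsMBHomogeneous L N)
    (hage : ∀ (B : Type w) [L.Structure B], Finite B →
      (Nonempty (B ↪[L] M) ↔ Nonempty (B ↪[L] N))) :
    BiExtendable L M N ∧ BiExtendable L N M := by
  exact ⟨biExtendable_aux L M N hM hN hage,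
    biExtendable_aux L N M hN hM (fun B _ hB => (hage B hB).symm)⟩
end

section
/- Let σ be a relational first-order language and let M be a countable σ-structure. Then M is HI-homogeneous if and only if M is HA-homogeneous; that is, every homomorphism between finite substructures of M extends to a self-embedding of M if and only if every homomorphism between finite substructures of M extends to an automorphism of M. -/
open FirstOrder Language Structure

universe u v w

/-- `M` is HI-homogeneous: every homomorphism between finite substructures of `M`
extends to a self-embedding of `M`. -/
def IsHIHomogeneous (L : FirstOrder.Language.{u, v}) (M : Type w) [L.Structure M] : Prop :=
  ∀ (A B : L.Substructure M), (A : Set M).Finite → (B : Set M).Finite →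
    ∀ f : A →[L] B, ∃ g : M ↪[L] M, ∀ a : A, g (a : M) = (f a : M)

/-- `M` is HA-homogeneous: every homomorphism between finite substructures of `M`
extends to an automorphism of `M`. -/
def IsHAHomogeneous (L : FirstOrder.Language.{u, v}) (M : Type w) [L.Structure M] : Prop :=
  ∀ (A B : L.Substructure M), (A : Set M).Finite → (B : Set M).Finite →
    ∀ f : A →[L] B, ∃ g : M ≃[L] M, ∀ a : A, g (a : M) = (f a : M)

theorem hi_homogeneous_iff_ha_homogeneous (L : FirstOrder.Language.{u, v}) [L.IsRelational]
    (M : Type w) [L.Structure M] [Countable M] :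
    IsHIHomogeneous L M ↔ IsHAHomogeneous L M := by
  constructor
  · intro h
    have key : L.IsExtensionPair M M := by
      rw [isExtensionPair_iff_exists_embedding_closure_singleton_sup]
      intro S hS f m
      have hSf : (S : Set M).Finite := by
        obtain ⟨t, rfl⟩ := hS
        rw [Substructure.closure_eq_of_isRelational]
        exact t.finite_toSet
      have hRf : ((f.toHom.range : L.Substructure M) : Set M).Finite := by
        haveI := hSf.to_subtype
        rw [Hom.range_coe]
        exact Set.finite_range _
      obtain ⟨g, hg⟩ := h S f.toHom.range hSf hRf f.equivRange.toHom
      refine ⟨g.comp (Substructure.subtype _), ?_⟩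
      ext a
      exact (hg a).symm
    have hu := (isUltrahomogeneous_iff_IsExtensionPair (L := L) (M := M)
      Structure.cg_of_countable).2 key
    intro A B hA hB f
    obtain ⟨g, hg⟩ := h A B hA hB f
    have hfg : A.FG := ⟨hA.toFinset, by simp⟩
    obtain ⟨e, he⟩ := hu A hfg (g.comp A.subtype)
    refine ⟨e, fun a => ?_⟩
    rw [← hg a]
    exact (DFunLike.congr_fun he a).symm
  · intro h A B hA hB f
    obtain ⟨g, hg⟩ := h A B hA hB f
    exact ⟨g.toEmbedding, hg⟩
end

section
/- Let G be a simple graph on a countably infinite vertex set V satisfying Alice's restaurant property (ARP). Then G is HE-homogeneous: for all finite subsets A, B of V and every function f : A → B that is a graph homomorphism between the subgraphs induced on A and B, there exists a surjective graph homomorphism g : V → V of G (g is surjective and maps adjacent vertices to adjacent vertices) whose restriction to A equals f. -/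
/-- A finite partial homomorphism: `p` is a homomorphism on the finite set `D`. -/
def HEGood {V : Type*} (G : SimpleGraph V) (s : Set V × (V → V)) : Prop :=
  s.1.Finite ∧ ∀ a ∈ s.1, ∀ b ∈ s.1, G.Adj a b → G.Adj (s.2 a) (s.2 b)

/-- Extension of partial maps. -/
def HELe {V : Type*} (s t : Set V × (V → V)) : Prop :=
  s.1 ⊆ t.1 ∧ ∀ a ∈ s.1, t.2 a = s.2 a

theorem HELe.trans' {V : Type*} {s t u : Set V × (V → V)} (h : HELe s t) (k : HELe t u) :
    HELe s u :=
  ⟨h.1.trans k.1, fun a ha => (k.2 a (h.1 ha)).trans (h.2 a ha)⟩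

open Classical in
theorem HEGood.add {V : Type*} {G : SimpleGraph V} {s : Set V × (V → V)} (hs : HEGood G s)
    (v x : V) (hv : v ∉ s.1) (hx : ∀ a ∈ s.1, G.Adj v a → G.Adj x (s.2 a)) :
    ∃ t, HEGood G t ∧ HELe s t ∧ v ∈ t.1 ∧ t.2 v = x := by
  have hne : ∀ a ∈ s.1, a ≠ v := fun a ha h => hv (h ▸ ha)
  refine ⟨(insert v s.1, Function.update s.2 v x), ⟨hs.1.insert v, ?_⟩,
    ⟨Set.subset_insert _ _, ?_⟩, Set.mem_insert _ _, by simp⟩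
  · rintro a (rfl | ha) b (rfl | hb) hab
    · exact absurd hab (G.irrefl)
    · simpa [Function.update_of_ne (hne b hb)] using hx b hb hab
    · simpa [Function.update_of_ne (hne a ha)] using (hx a ha hab.symm).symm
    · simpa [Function.update_of_ne (hne a ha), Function.update_of_ne (hne b hb)] using
        hs.2 a ha b hb hab
  · intro a ha
    simp [Function.update_of_ne (hne a ha)]

theorem HEGood.step {V : Type*} {G : SimpleGraph V}
    (hARP : ∀ U W : Set V, U.Finite → W.Finite → Disjoint U W →
      ∃ x : V, x ∉ U ∪ W ∧ (∀ u ∈ U, G.Adj x u) ∧ (∀ w ∈ W, ¬ G.Adj x w))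
    {s : Set V × (V → V)} (hs : HEGood G s) (v : V) :
    ∃ t, HEGood G t ∧ HELe s t ∧ v ∈ t.1 ∧ ∃ w ∈ t.1, t.2 w = v := by
  have h1 : ∃ t, HEGood G t ∧ HELe s t ∧ v ∈ t.1 := by
    by_cases hv : v ∈ s.1
    · exact ⟨s, hs, ⟨subset_rfl, fun _ _ => rfl⟩, hv⟩
    · obtain ⟨x, -, hx, -⟩ := hARP (s.2 '' s.1) ∅ (hs.1.image _) Set.finite_empty (by simp)
      obtain ⟨t, h1, h2, h3, -⟩ := hs.add v x hv (fun a ha _ => hx _ ⟨a, ha, rfl⟩)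
      exact ⟨t, h1, h2, h3⟩
  obtain ⟨t, ht, hst, hvt⟩ := h1
  obtain ⟨w, hw, -, hw'⟩ := hARP ∅ t.1 Set.finite_empty ht.1 (by simp)
  obtain ⟨u, h1, h2, h3, h4⟩ := ht.add w v (by simpa using hw)
    (fun a ha h => absurd h (hw' a ha))
  exact ⟨u, h1, hst.trans' h2, h2.1 hvt, w, h3, h4⟩

/-- A countably infinite graph with Alice's restaurant property is HE-homogeneous: every
graph homomorphism between finite induced subgraphs extends to a surjective graph
endomorphism. -/
theorem he_homogeneous_of_arp {V : Type*} [Countable V] [Infinite V] (G : SimpleGraph V)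
    (hARP : ∀ U W : Set V, U.Finite → W.Finite → Disjoint U W →
      ∃ x : V, x ∉ U ∪ W ∧ (∀ u ∈ U, G.Adj x u) ∧ (∀ w ∈ W, ¬ G.Adj x w))
    (A B : Set V) (hA : A.Finite) (hB : B.Finite) (f : A → B)
    (hf : ∀ a b : A, G.Adj (a : V) (b : V) → G.Adj (f a : V) (f b : V)) :
    ∃ g : V → V, Function.Surjective g ∧ (∀ v w : V, G.Adj v w → G.Adj (g v) (g w)) ∧
      ∀ a : A, g (a : V) = (f a : V) := by
  classical
  obtain ⟨e, he⟩ := exists_surjective_nat V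
  let s0 : {s : Set V × (V → V) // HEGood G s} :=
    ⟨(A, fun v => if h : v ∈ A then (f ⟨v, h⟩ : V) else v), hA, by
      intro a ha b hb hab
      have ha' : a ∈ A := ha
      have hb' : b ∈ A := hb
      simpa [ha', hb'] using hf ⟨a, ha⟩ ⟨b, hb⟩ hab⟩
  have hstep : ∀ (s : {s : Set V × (V → V) // HEGood G s}) (v : V),
      ∃ t : {s : Set V × (V → V) // HEGood G s},
        HELe s.1 t.1 ∧ v ∈ t.1.1 ∧ ∃ w ∈ t.1.1, t.1.2 w = v := by
    intro s v
    obtain ⟨t, h1, h2⟩ := s.2.step hARP v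
    exact ⟨⟨t, h1⟩, h2⟩
  choose F hF1 hF2 hF3 using hstep
  let S : ℕ → {s : Set V × (V → V) // HEGood G s} :=
    fun n => Nat.rec s0 (fun n s => F s (e n)) n
  have hS : ∀ n, S (n + 1) = F (S n) (e n) := fun n => rfl
  have hmono : ∀ m n, m ≤ n → HELe (S m).1 (S n).1 := by
    intro m n h
    induction n, h using Nat.le_induction with
    | base => exact ⟨subset_rfl, fun _ _ => rfl⟩
    | succ n _ ih => exact ih.trans' (hS n ▸ hF1 _ _)
  have hmem : ∀ v, ∃ n, v ∈ (S n).1.1 := by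
    intro v
    obtain ⟨n, rfl⟩ := he v
    exact ⟨n + 1, hF2 _ _⟩
  choose N hN using hmem
  have hg : ∀ v n, v ∈ (S n).1.1 → (S (N v)).1.2 v = (S n).1.2 v := by
    intro v n hv
    rcases le_total (N v) n with h | h
    · exact ((hmono _ _ h).2 v (hN v)).symm
    · exact (hmono _ _ h).2 v hv
  refine ⟨fun v => (S (N v)).1.2 v, ?_, ?_, ?_⟩
  · intro v
    obtain ⟨n, rfl⟩ := he v
    obtain ⟨w, hw, hw'⟩ := hF3 (S n) (e n)
    exact ⟨w, (hg w (n + 1) hw).trans hw'⟩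
  · intro v w hvw
    have h1 := (hmono _ _ (le_max_left (N v) (N w))).1 (hN v)
    have h2 := (hmono _ _ (le_max_right (N v) (N w))).1 (hN w)
    simp only [hg v _ h1, hg w _ h2]
    exact (S _).2.2 v h1 w h2 hvw
  · intro a
    have h0 : (a : V) ∈ (S 0).1.1 := a.2
    refine (hg a 0 h0).trans ?_
    change (if h : (a : V) ∈ A then (f ⟨a, h⟩ : V) else a) = _
    simp
end

section
/- Let n ≥ 3 and let G be a simple graph on a countably infinite vertex set V that contains an independent set of size n − 1 but no independent set of size n. Then G is not HE-homogeneous: there exist finite subsets A, B of V and a graph homomorphism f : A → B between the induced subgraphs such that no surjective graph homomorphism g : V → V of G restricts to f on A. -/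
/-- A countably infinite graph containing an independent set of size `n - 1` but no
independent set of size `n` (for `n ≥ 3`) is not HE-homogeneous: some graph homomorphism
between finite induced subgraphs extends to no surjective graph endomorphism. -/
theorem not_he_homogeneous_of_no_large_independent_set {V : Type*} [Countable V] [Infinite V]
    (G : SimpleGraph V) (n : ℕ) (hn : 3 ≤ n)
    (hsmall : ∃ S : Finset V, S.card = n - 1 ∧ ∀ a ∈ S, ∀ b ∈ S, ¬ G.Adj a b)
    (hbig : ¬ ∃ S : Finset V, S.card = n ∧ ∀ a ∈ S, ∀ b ∈ S, ¬ G.Adj a b) :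
    ∃ (A B : Set V) (_ : A.Finite) (_ : B.Finite) (f : A → B),
      (∀ a b : A, G.Adj (a : V) (b : V) → G.Adj (f a : V) (f b : V)) ∧
      ∀ g : V → V, Function.Surjective g → (∀ v w : V, G.Adj v w → G.Adj (g v) (g w)) →
        ¬ ∀ a : A, g (a : V) = (f a : V) := by
  classical
  obtain ⟨S, hS, hind⟩ := hsmall
  obtain ⟨a, ha, b, hb, hab⟩ := Finset.one_lt_card.mp (show 1 < S.card by omega)
  refine ⟨{a, b}, {a}, Set.toFinite _, Set.toFinite _, fun _ => ⟨a, rfl⟩, ?_, ?_⟩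
  · rintro ⟨u, hu⟩ ⟨v, hv⟩ h
    exfalso
    have hu' : u ∈ S := by rcases hu with rfl | rfl <;> assumption
    have hv' : v ∈ S := by rcases hv with rfl | rfl <;> assumption
    exact hind u hu' v hv' h
  · intro g hg hom hext
    have hga : g a = a := hext ⟨a, Or.inl rfl⟩
    have hgb : g b = a := hext ⟨b, Or.inr rfl⟩
    obtain ⟨s, hs⟩ := hg.hasRightInverse
    obtain ⟨x, hx, hgx⟩ : ∃ x, x ≠ s a ∧ g x = a := by
      by_cases h : a = s a
      · exact ⟨b, fun h' => hab (h.trans h'.symm), hgb⟩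
      · exact ⟨a, h, hga⟩
    have hxT : x ∉ S.image s := by
      intro h
      obtain ⟨c, _, rfl⟩ := Finset.mem_image.mp h
      rw [hs c] at hgx
      exact hx (by rw [hgx])
    have hT : ∀ y ∈ insert x (S.image s), g y ∈ S := by
      intro y hy
      rcases Finset.mem_insert.mp hy with rfl | hy
      · rw [hgx]; exact ha
      · obtain ⟨c, hc, rfl⟩ := Finset.mem_image.mp hy
        rw [hs c]; exact hc
    refine hbig ⟨insert x (S.image s), ?_, ?_⟩
    · rw [Finset.card_insert_of_notMem hxT, Finset.card_image_of_injective _ hs.injective]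
      omega
    · intro u hu v hv h
      exact hind _ (hT u hu) _ (hT v hv) (hom u v h)
end

section
/- Let V be a type and let D : V → V → Prop be a digraph that is irreflexive (no loops) and has no 2-cycles (never both D v w and D w v), and suppose that for all distinct vertices v, w with neither D v w nor D w v there exists a vertex x with D x v and D w x. Then every endomorphism of the digraph is injective: every function γ : V → V satisfying D v w → D (γ v) (γ w) for all v, w is injective. -/
/-- In a loopless digraph without 2-cycles in which every pair of distinct independent
vertices `v, w` admits a vertex `x` with `D x v` and `D w x`, every endomorphism of the
digraph is injective. -/
theorem digraph_endomorphism_injective {V : Type*} (D : V → V → Prop)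
    (hirr : ∀ v : V, ¬ D v v)
    (hno2 : ∀ v w : V, ¬ (D v w ∧ D w v))
    (hind : ∀ v w : V, v ≠ w → ¬ D v w → ¬ D w v → ∃ x : V, D x v ∧ D w x)
    (γ : V → V) (hγ : ∀ v w : V, D v w → D (γ v) (γ w)) :
    Function.Injective γ := by
  intro v w h
  by_contra hne
  have h1 : ¬ D v w := fun hd => hirr (γ w) (by
    have := hγ v w hd
    rwa [h] at this)
  have h2 : ¬ D w v := fun hd => hirr (γ w) (by
    have := hγ w v hd
    rwa [h] at this)
  obtain ⟨x, hx, hy⟩ := hind v w hne h1 h2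
  have a := hγ _ _ hx
  rw [h] at a
  exact hno2 _ _ ⟨a, hγ _ _ hy⟩
end
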